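/- arXiv:2402.03087 — 9 statements merged into one kernel-verified Lean document; each statement's English description precedes it below -/
import Mathlib

section
/- Let (G,s,t,c) be a flow network on a directed graph G=(V,E) with no parallel arcs and such that for every pair of vertices x,y at most one of the arcs xy and yx is in E, and let r be a nonnegative integer with r ≤ Σ_{xt∈E} c(xt). Let H be the undirected graph obtained from G by forgetting the directions of the arcs, with edge weight w({x,y}) = c(xy) for each arc xy of G. Define targets by t(v) = Σ_{xv∈E} c(xv) for every v ∈ V∖{s,t}, t(s) = Σ_{xs∈E} c(xs) + r, and t(t) = Σ_{xt∈E} c(xt) − r. Then the following are equivalent: (1) there is an all-or-nothing flow of value exactly r in G; (2) H has an orientation in which every vertex v has weighted outdegree exactly t(v); (3) H has an orientation in which every vertex v has weighted outdegree at least t(v); (4) H has an orientation in which every vertex v has weighted outdegree at most t(v). -/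
/-!
All-or-Nothing Flow versus Target/Minimum/Maximum Outdegree Orientation.

A flow network is given by a finite vertex type `V`, a set of arcs
`E : Finset (V × V)` (no parallel arcs, no loops, and for each pair of vertices at
most one of the two opposite arcs is present), a positive capacity function `c`,
a source `s` and a sink `t`.  The undirected graph `H` is obtained by forgetting
directions; an orientation of `H` is modelled as a finset `D` of ordered pairs
containing, for each arc of `E`, exactly one of the two orientations of the
corresponding undirected edge.
-/

open Finset

/-- `f` is an all-or-nothing flow on the network `(E, c, s, t)`:
it is zero outside `E`, on each arc it is `0` or the full capacity, and
flow conservation holds at every vertex other than `s` and `t`. -/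
def IsAONFlow {V : Type*} [Fintype V] [DecidableEq V] (E : Finset (V × V))
    (c : V × V → ℕ) (s t : V) (f : V × V → ℕ) : Prop :=
  (∀ e ∈ E, f e = 0 ∨ f e = c e) ∧ (∀ e, e ∉ E → f e = 0) ∧
  (∀ v, v ≠ s → v ≠ t →
    ∑ e ∈ E.filter (fun e => e.2 = v), f e = ∑ e ∈ E.filter (fun e => e.1 = v), f e)

/-- `D` is an orientation of the undirected graph underlying the arc set `E`:
for each arc of `E`, exactly one of the two directions of the corresponding
undirected edge is chosen, and every chosen pair comes from an arc of `E`. -/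
def IsOrientationOf {V : Type*} (E : Finset (V × V)) (D : Finset (V × V)) : Prop :=
  (∀ e ∈ E, (e ∈ D ∧ e.swap ∉ D) ∨ (e.swap ∈ D ∧ e ∉ D)) ∧
  (∀ p ∈ D, p ∈ E ∨ p.swap ∈ E)

/-- The weighted outdegree of `v` in the orientation `D`, where the weight of an
undirected edge is the capacity of the corresponding arc of `E`. -/
def wOutdeg {V : Type*} [DecidableEq V] (E : Finset (V × V)) (c : V × V → ℕ)
    (D : Finset (V × V)) (v : V) : ℕ :=
  ∑ p ∈ D.filter (fun p => p.1 = v), (if p ∈ E then c p else c p.swap)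

theorem aon_key {V : Type*} [Fintype V] [DecidableEq V]
    (E : Finset (V × V)) (c : V × V → ℕ)
    (hanti : ∀ e ∈ E, e.swap ∉ E) (D : Finset (V × V)) (hD : IsOrientationOf E D)
    (f : V × V → ℕ) (hf : ∀ e ∈ E, f e = if e ∈ D then c e else 0) (v : V) :
    wOutdeg E c D v + ∑ e ∈ E.filter (fun e => e.2 = v), f e
      = ∑ e ∈ E.filter (fun e => e.1 = v), f e + ∑ e ∈ E.filter (fun e => e.2 = v), c e := by
  obtain ⟨h1, h2⟩ := hD
  have hw : wOutdeg E c D v = ∑ e ∈ E.filter (fun e => e.1 = v), f e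
      + ∑ e ∈ E.filter (fun e => e.2 = v), (if e ∈ D then 0 else c e) := by
    unfold wOutdeg
    rw [← Finset.sum_filter_add_sum_filter_not _ (fun p => p ∈ E)]
    congr 1
    · have : ∑ e ∈ E.filter (fun e => e.1 = v), f e
          = ∑ e ∈ E.filter (fun e => e.1 = v), if e ∈ D then c e else 0 :=
        Finset.sum_congr rfl fun e he => hf e (Finset.mem_filter.1 he).1
      rw [this, ← Finset.sum_filter]
      refine Finset.sum_congr ?_ ?_
      · ext e
        simp only [Finset.mem_filter]
        tauto
      · intro e he
        simp only [Finset.mem_filter] at he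
        rw [if_pos he.1.1]
    · have : ∑ e ∈ E.filter (fun e => e.2 = v), (if e ∈ D then 0 else c e)
          = ∑ e ∈ E.filter (fun e => e.2 = v), (if e ∉ D then c e else 0) :=
        Finset.sum_congr rfl fun e he => by split_ifs <;> rfl
      rw [this, ← Finset.sum_filter]
      refine Finset.sum_bij' (fun e _ => e.swap) (fun e _ => e.swap) ?_ ?_ ?_ ?_ ?_
      · intro e he
        simp only [Finset.mem_filter] at he ⊢
        have hs : e.swap ∈ E := (h2 e he.1.1).resolve_left he.2
        have := h1 _ hs
        rw [Prod.swap_swap] at this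
        exact ⟨⟨hs, he.1.2⟩, by tauto⟩
      · intro e he
        simp only [Finset.mem_filter] at he ⊢
        have := h1 _ he.1.1
        exact ⟨⟨by tauto, he.1.2⟩, hanti _ he.1.1⟩
      · intro e _
        exact e.swap_swap
      · intro e _
        exact e.swap_swap
      · intro e he
        simp only [Finset.mem_filter] at he
        rw [if_neg he.2]
  rw [hw, add_assoc, ← Finset.sum_add_distrib]
  congr 1
  refine Finset.sum_congr rfl fun e he => ?_
  rw [hf e (Finset.mem_filter.1 he).1]
  split_ifs <;> simp

theorem aon_flow_iff_orientations {V : Type*} [Fintype V] [DecidableEq V]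
    (E : Finset (V × V)) (c : V × V → ℕ) (s t : V) (r : ℕ)
    (hst : s ≠ t)
    (hpos : ∀ e ∈ E, 0 < c e)
    (hloop : ∀ e ∈ E, e.1 ≠ e.2)
    (hanti : ∀ e ∈ E, e.swap ∉ E)
    (hr : r ≤ ∑ e ∈ E.filter (fun e => e.2 = t), c e)
    (tgt : V → ℕ)
    (htgts : tgt s = (∑ e ∈ E.filter (fun e => e.2 = s), c e) + r)
    (htgtt : tgt t = (∑ e ∈ E.filter (fun e => e.2 = t), c e) - r)
    (htgt : ∀ v, v ≠ s → v ≠ t → tgt v = ∑ e ∈ E.filter (fun e => e.2 = v), c e) :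
    [(∃ f, IsAONFlow E c s t f ∧
        ∑ e ∈ E.filter (fun e => e.1 = s), f e = (∑ e ∈ E.filter (fun e => e.2 = s), f e) + r),
     (∃ D, IsOrientationOf E D ∧ ∀ v, wOutdeg E c D v = tgt v),
     (∃ D, IsOrientationOf E D ∧ ∀ v, tgt v ≤ wOutdeg E c D v),
     (∃ D, IsOrientationOf E D ∧ ∀ v, wOutdeg E c D v ≤ tgt v)].TFAE := by
  have htot : ∑ v, tgt v = ∑ e ∈ E, c e := by
    have h : ∀ v, tgt v + (if v = t then r else 0)
        = ∑ e ∈ E.filter (fun e => e.2 = v), c e + (if v = s then r else 0) := by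
      intro v
      by_cases hs : v = s
      · subst hs
        simp [hst, htgts]
      · by_cases ht : v = t
        · subst ht
          simp only [if_true, if_neg hs, htgtt]
          omega
        · simp [hs, ht, htgt v hs ht]
    have h' := Finset.sum_congr (rfl : (Finset.univ : Finset V) = Finset.univ) (fun v _ => h v)
    rw [Finset.sum_add_distrib, Finset.sum_add_distrib, Finset.sum_fiberwise] at h'
    simpa using h'
  have hout : ∀ D, IsOrientationOf E D → ∑ v, wOutdeg E c D v = ∑ v, tgt v := by
    intro D hD
    have h' := Finset.sum_congr (rfl : (Finset.univ : Finset V) = Finset.univ)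
      (fun v _ => aon_key E c hanti D hD (fun e => if e ∈ D then c e else 0) (fun _ _ => rfl) v)
    rw [Finset.sum_add_distrib, Finset.sum_add_distrib, Finset.sum_fiberwise,
      Finset.sum_fiberwise, Finset.sum_fiberwise] at h'
    omega
  tfae_have 2 → 3 := fun ⟨D, hD, h⟩ => ⟨D, hD, fun v => (h v).ge⟩
  tfae_have 2 → 4 := fun ⟨D, hD, h⟩ => ⟨D, hD, fun v => (h v).le⟩
  tfae_have 3 → 2 := fun ⟨D, hD, h⟩ => ⟨D, hD, fun v =>
    ((Finset.sum_eq_sum_iff_of_le (fun v _ => h v)).1 (hout D hD).symm v (Finset.mem_univ v)).symm⟩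
  tfae_have 4 → 2 := fun ⟨D, hD, h⟩ => ⟨D, hD, fun v =>
    (Finset.sum_eq_sum_iff_of_le (fun v _ => h v)).1 (hout D hD) v (Finset.mem_univ v)⟩
  tfae_have 2 → 1 := by
    rintro ⟨D, hD, h⟩
    have key := aon_key E c hanti D hD (fun e => if e ∈ E ∧ e ∈ D then c e else 0)
      (fun e he => by simp [he])
    refine ⟨fun e => if e ∈ E ∧ e ∈ D then c e else 0, ⟨?_, ?_, ?_⟩, ?_⟩
    · intro e he
      dsimp only
      split_ifs <;> simp
    · intro e he
      simp [he]
    · intro v hs ht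
      have := key v
      rw [h v, htgt v hs ht] at this
      dsimp only at this ⊢
      omega
    · have := key s
      rw [h s, htgts] at this
      dsimp only at this ⊢
      omega
  tfae_have 1 → 2 := by
    rintro ⟨f, ⟨hf1, hf2, hf3⟩, hfs⟩
    let D : Finset (V × V) := E.filter (fun e => f e ≠ 0) ∪ (E.filter (fun e => f e = 0)).image Prod.swap
    have hmem : ∀ p, p ∈ D ↔ (p ∈ E ∧ f p ≠ 0) ∨ (p.swap ∈ E ∧ f p.swap = 0) := by
      intro p
      simp only [D, Finset.mem_union, Finset.mem_filter, Finset.mem_image]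
      refine or_congr Iff.rfl ⟨?_, fun hp => ⟨p.swap, hp, p.swap_swap⟩⟩
      rintro ⟨q, hq, rfl⟩
      rwa [Prod.swap_swap]
    have hD : IsOrientationOf E D := by
      refine ⟨fun e he => ?_, fun p hp => ?_⟩
      · have := hanti e he
        rw [hmem, hmem, Prod.swap_swap]
        by_cases h0 : f e = 0 <;> simp [he, this, h0]
      · rw [hmem] at hp
        exact hp.imp And.left And.left
    have key := aon_key E c hanti D hD f (fun e he => by
      have h1 := hanti e he
      have h2 := hf1 e he
      have h3 := hmem e
      by_cases h0 : f e = 0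
      · rw [if_neg (by rw [h3]; simp [h0, h1]), h0]
      · rw [if_pos (by rw [h3]; simp [h0, he])]
        exact h2.resolve_left h0)
    have hne : ∀ v, v ≠ t → wOutdeg E c D v = tgt v := by
      intro v ht
      have hk := key v
      by_cases hs : v = s
      · subst hs
        omega
      · have := hf3 v hs ht
        have := htgt v hs ht
        omega
    refine ⟨D, hD, fun v => ?_⟩
    by_cases ht : v = t
    · subst ht
      have h := hout D hD
      rw [← Finset.add_sum_erase _ _ (Finset.mem_univ v),
        ← Finset.add_sum_erase _ tgt (Finset.mem_univ v),
        Finset.sum_congr rfl (fun u hu => hne u (Finset.ne_of_mem_erase hu))] at h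
      exact Nat.add_right_cancel h
    · exact hne v ht
  tfae_finish
end

section
/- Fix an integer γ ≥ 3 and consider the directed weighted graph (gadget) with vertices x, y, v_1, …, v_{2γ−4} and the following arcs with capacities: an arc v_i v_{i+1} of capacity 1 for each odd i ∈ {1,…,2γ−5}, an arc v_i v_{i+1} of capacity 2 for each even i ∈ {2,…,2γ−6}, an arc from x to v_1 of capacity 2, an arc from x to v_i of capacity 1 for each even i ∈ {2,…,2γ−4}, an arc from v_i to y of capacity 1 for each odd i ∈ {1,…,2γ−5}, and an arc from v_{2γ−4} to y of capacity 2. Let f assign to each arc e of the gadget a value f(e) ∈ {0, c(e)} such that at every vertex v_i the sum of f over incoming arcs equals the sum of f over outgoing arcs. Then either f(e) = 0 for every arc of the gadget, or f(e) = c(e) for every arc of the gadget; in particular, the total flow leaving x (and entering y) through the gadget is either 0 or exactly γ. -/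
/-!
The capacity-{1,2} gadget replacing an arc of capacity `γ ≥ 3`.

Vertices: `Sum.inr false = x`, `Sum.inr true = y`, and `Sum.inl i` (0-indexed,
`i : Fin (2γ-4)`) is the path vertex `v_{i+1}` of the paper (1-indexed).

Arcs and capacities (`gcap` is `0` exactly on the non-arcs):
* `v_i → v_{i+1}` of capacity 1 for odd (1-indexed) `i`, i.e. even 0-indexed `i`;
* `v_i → v_{i+1}` of capacity 2 for even (1-indexed) `i`;
* `x → v_1` of capacity 2;
* `x → v_i` of capacity 1 for even (1-indexed) `i`, i.e. odd 0-indexed `i`;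
* `v_i → y` of capacity 1 for odd (1-indexed) `i ≤ 2γ-5`;
* `v_{2γ-4} → y` of capacity 2.
-/

/-- Vertex type of the gadget with `n` internal path vertices. -/
abbrev GadgetV (n : ℕ) := Fin n ⊕ Bool

/-- Capacities of the gadget arcs (and `0` on non-arcs). -/
def gcap (γ : ℕ) : GadgetV (2 * γ - 4) × GadgetV (2 * γ - 4) → ℕ := fun e =>
  match e with
  | (Sum.inl i, Sum.inl j) =>
      if (j : ℕ) = (i : ℕ) + 1 then (if (i : ℕ) % 2 = 0 then 1 else 2) else 0
  | (Sum.inr false, Sum.inl i) =>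
      if (i : ℕ) = 0 then 2 else if (i : ℕ) % 2 = 1 then 1 else 0
  | (Sum.inl i, Sum.inr true) =>
      if (i : ℕ) = 2 * γ - 5 then 2 else if (i : ℕ) % 2 = 0 then 1 else 0
  | _ => 0

theorem sumX_aux (m : ℕ) :
    ∑ i ∈ Finset.range (2 * m + 2), (if i = 0 then 2 else if i % 2 = 1 then 1 else 0) = m + 3 := by
  induction m with
  | zero => simp [Finset.sum_range_succ]
  | succ k ih =>
    rw [show 2 * (k + 1) + 2 = (2 * k + 2) + 1 + 1 by ring, Finset.sum_range_succ,
      Finset.sum_range_succ, ih, if_neg (by omega), if_neg (by omega), if_neg (by omega),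
      if_pos (by omega)]

theorem sumY_aux' (m : ℕ) :
    ∑ i ∈ Finset.range (2 * m + 1), (if i % 2 = 0 then 1 else 0) = m + 1 := by
  induction m with
  | zero => rfl
  | succ k ih =>
    rw [show 2 * (k + 1) + 1 = (2 * k + 1) + 1 + 1 by ring, Finset.sum_range_succ,
      Finset.sum_range_succ, ih]
    split_ifs <;> omega

theorem sumY_aux (m : ℕ) :
    ∑ i ∈ Finset.range (2 * m + 2),
      (if i = 2 * m + 1 then 2 else if i % 2 = 0 then 1 else 0) = m + 3 := by
  rw [Finset.sum_range_succ]
  have h : ∑ i ∈ Finset.range (2 * m + 1),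
      (if i = 2 * m + 1 then 2 else if i % 2 = 0 then 1 else 0) =
      ∑ i ∈ Finset.range (2 * m + 1), (if i % 2 = 0 then 1 else 0) := by
    apply Finset.sum_congr rfl
    intro i hi
    have := Finset.mem_range.1 hi
    rw [if_neg (by omega)]
  rw [h, sumY_aux']
  simp

theorem gadget_all_or_nothing (γ : ℕ) (hγ : 3 ≤ γ)
    (f : GadgetV (2 * γ - 4) × GadgetV (2 * γ - 4) → ℕ)
    (haon : ∀ e, f e = 0 ∨ f e = gcap γ e)
    (hcons : ∀ i : Fin (2 * γ - 4),
      ∑ u : GadgetV (2 * γ - 4), f (u, Sum.inl i) =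
      ∑ u : GadgetV (2 * γ - 4), f (Sum.inl i, u)) :
    ((∀ e, f e = 0) ∨ (∀ e, f e = gcap γ e)) ∧
    ((∑ u : GadgetV (2 * γ - 4), f (Sum.inr false, u) = 0 ∧
      ∑ u : GadgetV (2 * γ - 4), f (u, Sum.inr true) = 0) ∨
     (∑ u : GadgetV (2 * γ - 4), f (Sum.inr false, u) = γ ∧
      ∑ u : GadgetV (2 * γ - 4), f (u, Sum.inr true) = γ)) := by
  have key : (∀ e, f e = 0) ∨ (∀ e, f e = gcap γ e) := by
    have hz : ∀ e, gcap γ e = 0 → f e = 0 := fun e he => by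
      rcases haon e with h | h
      · exact h
      · rw [h, he]
    -- the flag
    obtain ⟨t, ht, h0⟩ : ∃ t : ℕ, (t = 0 ∨ t = 1) ∧
        f (Sum.inr false, Sum.inl ⟨0, by omega⟩) = 2 * t := by
      rcases haon (Sum.inr false, Sum.inl ⟨0, by omega⟩) with h | h
      · exact ⟨0, Or.inl rfl, h⟩
      · exact ⟨1, Or.inr rfl, by rw [h]; simp [gcap]⟩
    -- total inflow and outflow at path vertices
    have hin0 : ∀ hi : 0 < 2 * γ - 4, ∑ u : GadgetV (2 * γ - 4), f (u, Sum.inl ⟨0, hi⟩) =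
        f (Sum.inr false, Sum.inl ⟨0, hi⟩) := by
      intro hi
      apply Fintype.sum_eq_single
      rintro (j | _ | _) hj
      · exact hz _ (by simp [gcap])
      · exact absurd rfl hj
      · exact hz _ (by simp [gcap])
    have hin : ∀ (i : ℕ) (hi : i + 1 < 2 * γ - 4),
        ∑ u : GadgetV (2 * γ - 4), f (u, Sum.inl ⟨i + 1, hi⟩) =
        f (Sum.inl ⟨i, by omega⟩, Sum.inl ⟨i + 1, hi⟩) +
          f (Sum.inr false, Sum.inl ⟨i + 1, hi⟩) := by
      intro i hi
      rw [Fintype.sum_sum_type, Fintype.sum_bool,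
        hz (Sum.inr true, Sum.inl ⟨i + 1, hi⟩) (by simp [gcap]), zero_add]
      congr 1
      apply Fintype.sum_eq_single
      intro j hj
      apply hz
      have : ¬ (i = (j : ℕ)) := fun h => hj (Fin.ext h.symm)
      simp [gcap, this]
    have hout : ∀ (i : ℕ) (hi : i + 1 < 2 * γ - 4),
        ∑ u : GadgetV (2 * γ - 4), f (Sum.inl ⟨i, by omega⟩, u) =
        f (Sum.inl ⟨i, by omega⟩, Sum.inl ⟨i + 1, hi⟩) +
          f (Sum.inl ⟨i, by omega⟩, Sum.inr true) := by
      intro i hi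
      rw [Fintype.sum_sum_type, Fintype.sum_bool,
        hz (Sum.inl ⟨i, _⟩, Sum.inr false) (by simp [gcap]), add_zero]
      congr 1
      apply Fintype.sum_eq_single
      intro j hj
      apply hz
      have : ¬ ((j : ℕ) = i + 1) := fun h => hj (Fin.ext h)
      simp [gcap, this]
    have houtl : ∀ (i : ℕ) (hi : i < 2 * γ - 4), i = 2 * γ - 5 →
        ∑ u : GadgetV (2 * γ - 4), f (Sum.inl ⟨i, hi⟩, u) =
          f (Sum.inl ⟨i, hi⟩, Sum.inr true) := by
      intro i hi hl
      apply Fintype.sum_eq_single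
      rintro (j | _ | _) hj
      · apply hz
        have : ¬ ((j : ℕ) = i + 1) := by have := j.2; omega
        simp [gcap, this]
      · exact hz _ (by simp [gcap])
      · exact absurd rfl hj
    have main : ∀ (i : ℕ) (hi : i < 2 * γ - 4),
        f (Sum.inr false, Sum.inl ⟨i, hi⟩) =
          t * (if i = 0 then 2 else if i % 2 = 1 then 1 else 0) ∧
        f (Sum.inl ⟨i, hi⟩, Sum.inr true) =
          t * (if i = 2 * γ - 5 then 2 else if i % 2 = 0 then 1 else 0) ∧
        ∀ hi' : i + 1 < 2 * γ - 4, f (Sum.inl ⟨i, hi⟩, Sum.inl ⟨i + 1, hi'⟩) =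
          t * (if i % 2 = 0 then 1 else 2) := by
      intro i
      induction i with
      | zero =>
        intro hi
        have c := hcons ⟨0, hi⟩
        have h1 : 0 + 1 < 2 * γ - 4 := by omega
        rw [hin0, hout 0 h1, h0] at c
        have a1 := haon (Sum.inl ⟨0, hi⟩, Sum.inr true)
        have a2 := haon (Sum.inl ⟨0, hi⟩, Sum.inl ⟨0 + 1, h1⟩)
        have hne : ¬ (0 = 2 * γ - 5) := by omega
        simp only [gcap, hne, if_true, if_false, Nat.zero_mod] at a1 a2
        refine ⟨by rw [h0]; simp [mul_comm], ?_, fun _ => ?_⟩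
        · simp only [hne, if_true, if_false, Nat.zero_mod]; omega
        · simp only [if_true, Nat.zero_mod]; omega
      | succ i ih =>
        intro hi
        obtain ⟨-, -, hC⟩ := ih (by omega)
        have hC := hC hi
        have c := hcons ⟨i + 1, hi⟩
        rw [hin, hC] at c
        have a0 := haon (Sum.inr false, Sum.inl ⟨i + 1, hi⟩)
        have a1 := haon (Sum.inl ⟨i + 1, hi⟩, Sum.inr true)
        simp only [gcap] at a0 a1
        by_cases hl : i + 1 = 2 * γ - 5
        · rw [houtl _ _ hl] at c
          refine ⟨?_, ?_, fun h => by omega⟩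
          all_goals
            have q0 : (i + 1 = 0) = False := eq_false (by omega)
            rcases Nat.mod_two_eq_zero_or_one i with q1 | q1
            · have q2 : (i + 1) % 2 = 1 := by omega
              simp only [q0, q1, q2, eq_true hl, if_true, if_false, one_ne_zero] at a0 a1 c ⊢
              rcases ht with rfl | rfl <;> omega
            · have q2 : (i + 1) % 2 = 0 := by omega
              omega
        · have h1 : i + 1 + 1 < 2 * γ - 4 := by omega
          rw [hout _ h1] at c
          have a2 := haon (Sum.inl ⟨i + 1, hi⟩, Sum.inl ⟨i + 1 + 1, h1⟩)
          simp only [gcap] at a2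
          refine ⟨?_, ?_, fun _ => ?_⟩
          all_goals
            have q0 : (i + 1 = 0) = False := eq_false (by omega)
            rcases Nat.mod_two_eq_zero_or_one i with q1 | q1
            · have q2 : (i + 1) % 2 = 1 := by omega
              simp only [q0, q1, q2, eq_false hl, if_true, if_false, one_ne_zero, zero_ne_one] at a0 a1 a2 c ⊢
              rcases ht with rfl | rfl <;> omega
            · have q2 : (i + 1) % 2 = 0 := by omega
              simp only [q0, q1, q2, eq_false hl, if_true, if_false, one_ne_zero, zero_ne_one] at a0 a1 a2 c ⊢
              rcases ht with rfl | rfl <;> omega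
    have all : ∀ e, f e = t * gcap γ e := by
      rintro ⟨⟨i, hi⟩ | _ | _, ⟨j, hj⟩ | _ | _⟩
      · by_cases h : j = i + 1
        · subst h
          rw [(main i hi).2.2 hj]
          simp [gcap]
        · have : gcap γ (Sum.inl ⟨i, hi⟩, Sum.inl ⟨j, hj⟩) = 0 := by simp [gcap, h]
          rw [hz _ this, this, mul_zero]
      · rw [hz _ (by simp [gcap])]; simp [gcap]
      · exact (main i hi).2.1
      · exact (main j hj).1
      all_goals rw [hz _ (by simp [gcap])]; simp [gcap]
    rcases ht with rfl | rfl
    · left; intro e; rw [all e, zero_mul]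
    · right; intro e; rw [all e, one_mul]
  refine ⟨key, ?_⟩
  rcases key with h | h
  · left; simp [h]
  · right
    obtain ⟨m, rfl⟩ : ∃ m, γ = m + 3 := ⟨γ - 3, by omega⟩
    simp only [h, Fintype.sum_sum_type, Fintype.sum_bool, gcap, add_zero]
    have e1 : 2 * (m + 3) - 4 = 2 * m + 2 := by omega
    have e2 : 2 * (m + 3) - 5 = 2 * m + 1 := by omega
    rw [Fin.sum_univ_eq_sum_range (fun i => if i = 0 then 2 else if i % 2 = 1 then 1 else 0),
      Fin.sum_univ_eq_sum_range
        (fun i => if i = 2 * (m + 3) - 5 then 2 else if i % 2 = 0 then 1 else 0), e1, e2]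
    exact ⟨sumX_aux m, sumY_aux m⟩
end

section
/- Let G=(V,E) be an undirected graph with a positive integer weight w(e) on each edge and a positive integer target t(v) for each vertex. Construct a graph H as follows: start from the vertex set V; for each edge e = {x,y} of weight γ = w(e), add three new vertices a_e, b_e, c_e forming a triangle, add γ new paths of three vertices each in which the first vertex is additionally adjacent to x and the third vertex is additionally adjacent to a_e, and add γ new paths of three vertices each in which the first vertex is additionally adjacent to b_e and the third vertex is additionally adjacent to y (all gadget vertices for distinct edges are distinct and new). Define f by f(u) = 1 for every new vertex u and f(v) = t(v) for every original vertex v ∈ V. Then H has an f-dominating set of size at most Σ_{e∈E} (2·w(e)+1) if and only if G has an orientation in which every vertex v has weighted outdegree at least t(v). -/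
/-!
The `f`-Dominating Set gadget construction.

The input graph `G` is given by a finite vertex type `V` and an arc set
`A : Finset (V × V)` listing each undirected edge exactly once as an ordered pair
(loopless, and never both orientations), with positive weights `w` and positive
targets `t`.

The graph `H` has vertex type `FDomV V`: original vertices `Sum.inl x`, and for
each edge `e = (x,y)` the gadget vertices `Sum.inr (e, g)` where `g` is either a
triangle vertex (`Sum.inl 0 = a_e`, `Sum.inl 1 = b_e`, `Sum.inl 2 = c_e`) or a
path vertex `Sum.inr (side, j, pos)`: position `pos : Fin 3` of the `j`-th
three-vertex path on side `side` (`false` = the `x`-side paths whose first vertex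
is adjacent to `x` and third vertex is adjacent to `a_e`; `true` = the `y`-side
paths whose first vertex is adjacent to `b_e` and third vertex is adjacent to `y`).
The vertex set of `H` is `fdomVset A w` (path indices `j < w e`).

An orientation of `G` is a function `o : V × V → Bool`; `o e = true` means edge
`e` is directed from `e.1` to `e.2`.
-/

open Finset

/-- Gadget vertices for one edge. -/
abbrev FDomGad := Fin 3 ⊕ (Bool × ℕ × Fin 3)

/-- Vertices of the constructed graph `H`. -/
abbrev FDomV (V : Type*) := V ⊕ ((V × V) × FDomGad)

/-- Adjacency within one edge gadget (base relation, to be symmetrised). -/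
def fdomGadAdj : FDomGad → FDomGad → Prop
  | Sum.inl i, Sum.inl i' => i ≠ i'
  | Sum.inl i, Sum.inr (s, _, p) =>
      (i = 0 ∧ s = false ∧ (p : ℕ) = 2) ∨ (i = 1 ∧ s = true ∧ (p : ℕ) = 0)
  | Sum.inr (s, j, p), Sum.inr (s', j', p') => s = s' ∧ j = j' ∧ (p' : ℕ) = (p : ℕ) + 1
  | _, _ => False

/-- Base adjacency relation of `H` (to be symmetrised). -/
def fdomBase {V : Type*} : FDomV V → FDomV V → Prop
  | Sum.inl x, Sum.inr (e, Sum.inr (false, _, p)) => x = e.1 ∧ (p : ℕ) = 0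
  | Sum.inl y, Sum.inr (e, Sum.inr (true, _, p)) => y = e.2 ∧ (p : ℕ) = 2
  | Sum.inr (e, g), Sum.inr (e', g') => e = e' ∧ fdomGadAdj g g'
  | _, _ => False

/-- Adjacency in `H`. -/
def fdomAdj {V : Type*} (u v : FDomV V) : Prop := fdomBase u v ∨ fdomBase v u

/-- The vertex set of `H`. -/
def fdomVset {V : Type*} (A : Finset (V × V)) (w : V × V → ℕ) : Set (FDomV V) :=
  {u | match u with
       | Sum.inl _ => True
       | Sum.inr (e, Sum.inl _) => e ∈ A
       | Sum.inr (e, Sum.inr (_, j, _)) => e ∈ A ∧ j < w e}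

/-- The demand function of `H`: `t` on original vertices, `1` on gadget vertices. -/
def fdomDemand {V : Type*} (t : V → ℕ) : FDomV V → ℕ
  | Sum.inl x => t x
  | Sum.inr _ => 1

/-- Index set of the disjoint groups (triangles and paths). -/
def fdomK {V : Type*} (A : Finset (V × V)) (w : V × V → ℕ) :
    Finset (Σ _ : V × V, Option (Bool × ℕ)) :=
  A.sigma (fun e => Finset.insertNone ((Finset.univ : Finset Bool) ×ˢ Finset.range (w e)))

theorem fdomK_card {V : Type*} (A : Finset (V × V)) (w : V × V → ℕ) :
    (fdomK A w).card = ∑ e ∈ A, (2 * w e + 1) := by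
  simp [fdomK, Finset.card_sigma]

theorem fdomK_none {V : Type*} (A : Finset (V × V)) (w : V × V → ℕ) (e : V × V) :
    (⟨e, none⟩ : Σ _ : V × V, Option (Bool × ℕ)) ∈ fdomK A w ↔ e ∈ A := by
  simp [fdomK]

theorem fdomK_some {V : Type*} (A : Finset (V × V)) (w : V × V → ℕ) (e : V × V) (s : Bool)
    (j : ℕ) :
    (⟨e, some (s, j)⟩ : Σ _ : V × V, Option (Bool × ℕ)) ∈ fdomK A w ↔ e ∈ A ∧ j < w e := by
  simp [fdomK]

/-- Group of a vertex. -/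
def fdomKey {V : Type*} : FDomV V → Option (Σ _ : V × V, Option (Bool × ℕ))
  | Sum.inl _ => none
  | Sum.inr (e, Sum.inl _) => some ⟨e, none⟩
  | Sum.inr (e, Sum.inr (s, j, _)) => some ⟨e, some (s, j)⟩

/-- Chosen vertex in each group. -/
def fdomPick {V : Type*} (o : V × V → Bool) : (Σ _ : V × V, Option (Bool × ℕ)) → FDomV V
  | ⟨e, none⟩ => Sum.inr (e, Sum.inl (if o e then 0 else 1))
  | ⟨e, some (s, j)⟩ => Sum.inr (e, Sum.inr (s, j,
      if o e then (if s then 1 else 0) else (if s then 2 else 1)))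

theorem fdomVset_finite {V : Type*} [Fintype V] (A : Finset (V × V)) (w : V × V → ℕ) :
    (fdomVset A w).Finite := by
  classical
  have h : (fdomVset A w) ⊆ Set.range (Sum.inl : V → FDomV V) ∪
      (((fdomK A w) ×ˢ (Finset.univ : Finset (Fin 3))).image (fun q =>
        match q with
        | (⟨e, none⟩, i) => (Sum.inr (e, Sum.inl i) : FDomV V)
        | (⟨e, some (s, j)⟩, i) => Sum.inr (e, Sum.inr (s, j, i))) : Finset (FDomV V)) := by
    rintro (x | ⟨e, i | ⟨s, j, p⟩⟩) hx
    · left; exact ⟨x, rfl⟩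
    · right
      simp only [Finset.coe_image, Set.mem_image]
      exact ⟨(⟨e, none⟩, i), by simpa [fdomK_none] using (show e ∈ A from hx), rfl⟩
    · right
      simp only [Finset.coe_image, Set.mem_image]
      exact ⟨(⟨e, some (s, j)⟩, p), by simpa [fdomK_some] using (show e ∈ A ∧ j < w e from hx), rfl⟩
  exact ((Set.finite_range _).union (Finset.finite_toSet _)).subset h

/-- A dominated vertex with positive demand has a neighbour in `S`. -/
theorem fdom_nbr {V : Type*} {S : Set (FDomV V)} {v : FDomV V} {n : ℕ} (hn : 0 < n)
    (h : n ≤ (S ∩ {u | fdomAdj v u}).ncard) : ∃ u ∈ S, fdomAdj v u := by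
  obtain ⟨u, hu⟩ := Set.nonempty_of_ncard_ne_zero (s := S ∩ {u | fdomAdj v u}) (by omega)
  exact ⟨u, hu.1, hu.2⟩

theorem fdom_forward {V : Type*} [Fintype V] [DecidableEq V]
    (A : Finset (V × V)) (w : V × V → ℕ) (t : V → ℕ)
    (S : Set (FDomV V)) (hS : S ⊆ fdomVset A w)
    (hc : S.ncard ≤ ∑ e ∈ A, (2 * w e + 1))
    (hd : ∀ v ∈ fdomVset A w, v ∉ S → fdomDemand t v ≤ (S ∩ {u | fdomAdj v u}).ncard) :
    ∃ o : V × V → Bool, ∀ v : V,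
      t v ≤ ∑ e ∈ A.filter (fun e => (e.1 = v ∧ o e = true) ∨ (e.2 = v ∧ o e = false)), w e := by
  classical
  have hfin : S.Finite := (fdomVset_finite A w).subset hS
  have hd1 : ∀ e g, (Sum.inr (e, g) : FDomV V) ∈ fdomVset A w → (Sum.inr (e, g) : FDomV V) ∉ S →
      ∃ u ∈ S, fdomAdj (Sum.inr (e, g)) u := fun e g h1 h2 =>
    fdom_nbr one_pos (hd _ h1 h2)
  have hsub : (fdomK A w).map Function.Embedding.some ⊆ hfin.toFinset.image fdomKey := by
    intro k hk
    simp only [Finset.mem_map, Function.Embedding.some_apply] at hk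
    obtain ⟨⟨e, _ | ⟨s, j⟩⟩, hk, rfl⟩ := hk
    · rw [fdomK_none] at hk
      simp only [Finset.mem_image, Set.Finite.mem_toFinset]
      by_cases h : (Sum.inr (e, Sum.inl 2) : FDomV V) ∈ S
      · exact ⟨_, h, rfl⟩
      · obtain ⟨u, hu, hadj⟩ := hd1 e (Sum.inl 2) hk h
        refine ⟨u, hu, ?_⟩
        clear hu h hd1 hd hS hc
        rcases u with x | ⟨e', i | ⟨s, j, p⟩⟩ <;>
          simp [fdomAdj, fdomBase, fdomGadAdj, fdomKey] at hadj ⊢ <;> grind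
    · rw [fdomK_some] at hk
      simp only [Finset.mem_image, Set.Finite.mem_toFinset]
      by_cases h : (Sum.inr (e, Sum.inr (s, j, 1)) : FDomV V) ∈ S
      · exact ⟨_, h, rfl⟩
      · obtain ⟨u, hu, hadj⟩ := hd1 e (Sum.inr (s, j, 1)) hk h
        refine ⟨u, hu, ?_⟩
        clear hu h hd1 hd hS hc
        rcases u with x | ⟨e', i | ⟨s', j', p⟩⟩ <;> cases s <;>
          simp [fdomAdj, fdomBase, fdomGadAdj, fdomKey] at hadj ⊢ <;> grind
  have hcard : ((fdomK A w).map Function.Embedding.some).card = ∑ e ∈ A, (2 * w e + 1) := by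
    rw [Finset.card_map, fdomK_card]
  have hSc : hfin.toFinset.card ≤ ∑ e ∈ A, (2 * w e + 1) := by
    rwa [← Set.ncard_eq_toFinset_card S hfin]
  have h1 := Finset.card_le_card hsub
  have h2 := Finset.card_image_le (s := hfin.toFinset) (f := fdomKey)
  have hinj : Set.InjOn fdomKey (hfin.toFinset : Set (FDomV V)) :=
    Finset.card_image_iff.mp (by omega)
  have himg := Finset.eq_of_subset_of_card_le hsub (by omega)
  have hinl : ∀ x : V, (Sum.inl x : FDomV V) ∉ S := by
    intro x hx
    have : fdomKey (Sum.inl x : FDomV V) ∈ (fdomK A w).map Function.Embedding.some := by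
      rw [himg]; exact Finset.mem_image_of_mem _ (by simpa using hx)
    simp [fdomKey] at this
  have huniq : ∀ u ∈ S, ∀ v ∈ S, fdomKey u = fdomKey v → u = v := by
    intro u hu v hv h
    exact hinj (by simpa using hu) (by simpa using hv) h
  have htri : ∀ e i i', (Sum.inr (e, Sum.inl i) : FDomV V) ∈ S →
      (Sum.inr (e, Sum.inl i') : FDomV V) ∈ S → i = i' := by
    intro e i i' h h'
    simpa using huniq _ h _ h' rfl
  have hpath : ∀ e s j p p', (Sum.inr (e, Sum.inr (s, j, p)) : FDomV V) ∈ S →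
      (Sum.inr (e, Sum.inr (s, j, p')) : FDomV V) ∈ S → p = p' := by
    intro e s j p p' h h'
    simpa using huniq _ h _ h' rfl
  have hx : ∀ e j, (Sum.inr (e, Sum.inr (false, j, 0)) : FDomV V) ∈ S →
      (Sum.inr (e, Sum.inl 0) : FDomV V) ∈ S := by
    intro e j h
    have hm := hS h
    have h3 : (Sum.inr (e, Sum.inr (false, j, 2)) : FDomV V) ∉ S := fun h' => by
      have := hpath _ _ _ _ _ h h'
      simp at this
    obtain ⟨u, hu, hadj⟩ := hd1 e (Sum.inr (false, j, 2)) hm h3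
    rcases u with x | ⟨e', i | ⟨s', j', p⟩⟩
    · exact absurd hu (hinl x)
    · simp [fdomAdj, fdomBase, fdomGadAdj] at hadj
      obtain ⟨rfl, rfl⟩ := hadj
      exact hu
    · exfalso
      have hp : e' = e ∧ s' = false ∧ j' = j ∧ (p : ℕ) = 1 := by
        simp [fdomAdj, fdomBase, fdomGadAdj] at hadj
        grind
      obtain ⟨rfl, rfl, rfl, hp⟩ := hp
      have := hpath _ _ _ _ _ h hu
      subst this
      simp at hp
  have hy : ∀ e j, (Sum.inr (e, Sum.inr (true, j, 2)) : FDomV V) ∈ S →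
      (Sum.inr (e, Sum.inl 1) : FDomV V) ∈ S := by
    intro e j h
    have hm := hS h
    have h3 : (Sum.inr (e, Sum.inr (true, j, 0)) : FDomV V) ∉ S := fun h' => by
      have := hpath _ _ _ _ _ h h'
      simp at this
    obtain ⟨u, hu, hadj⟩ := hd1 e (Sum.inr (true, j, 0)) hm h3
    rcases u with x | ⟨e', i | ⟨s', j', p⟩⟩
    · exact absurd hu (hinl x)
    · simp [fdomAdj, fdomBase, fdomGadAdj] at hadj
      obtain ⟨rfl, rfl⟩ := hadj
      exact hu
    · exfalso
      have hp : e' = e ∧ s' = true ∧ j' = j ∧ (p : ℕ) = 1 := by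
        simp [fdomAdj, fdomBase, fdomGadAdj] at hadj
        grind
      obtain ⟨rfl, rfl, rfl, hp⟩ := hp
      have := hpath _ _ _ _ _ h hu
      subst this
      simp at hp
  refine ⟨fun e => decide ((Sum.inr (e, Sum.inl 0) : FDomV V) ∈ S), fun v => ?_⟩
  refine (hd (Sum.inl v) trivial (hinl v)).trans ?_
  set F := A.filter (fun e => (e.1 = v ∧ decide ((Sum.inr (e, Sum.inl 0) : FDomV V) ∈ S) = true) ∨
    (e.2 = v ∧ decide ((Sum.inr (e, Sum.inl 0) : FDomV V) ∈ S) = false)) with hF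
  have hsub2 : S ∩ {u | fdomAdj (Sum.inl v) u} ⊆
      ((F.sigma (fun e => Finset.range (w e))).image (fun q =>
        (Sum.inr (q.1, if (Sum.inr (q.1, Sum.inl 0) : FDomV V) ∈ S then Sum.inr (false, q.2, 0)
          else Sum.inr (true, q.2, 2)) : FDomV V)) : Finset (FDomV V)) := by
    rintro u ⟨hu, hadj⟩
    have hm := hS hu
    rw [Finset.coe_image, Set.mem_image]
    rcases u with x | ⟨e, i | ⟨_ | _, j, p⟩⟩
    · exact absurd hu (hinl x)
    · simp [fdomAdj, fdomBase] at hadj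
    · have hp : v = e.1 ∧ p = 0 := by
        simpa [fdomAdj, fdomBase] using hadj
      obtain ⟨rfl, rfl⟩ := hp
      have ha := hx _ _ hu
      exact ⟨⟨e, j⟩, by simpa [hF, ha] using (show e ∈ A ∧ j < w e from hm), by simp [ha]⟩
    · have hp : v = e.2 ∧ p = 2 := by
        have : v = e.2 ∧ (p : ℕ) = 2 := by simpa [fdomAdj, fdomBase] using hadj
        exact ⟨this.1, Fin.ext this.2⟩
      obtain ⟨rfl, rfl⟩ := hp
      have hb := hy _ _ hu
      have ha : (Sum.inr (e, Sum.inl 0) : FDomV V) ∉ S := fun ha => by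
        have := htri _ _ _ ha hb
        simp at this
      exact ⟨⟨e, j⟩, by simpa [hF, ha] using (show e ∈ A ∧ j < w e from hm), by simp [ha]⟩
  refine (Set.ncard_le_ncard hsub2 (Finset.finite_toSet _)).trans ?_
  rw [Set.ncard_coe_finset]
  refine Finset.card_image_le.trans ?_
  rw [Finset.card_sigma]
  simp only [Finset.card_range]
  exact le_rfl

theorem fdom_backward {V : Type*} [Fintype V] [DecidableEq V]
    (A : Finset (V × V)) (w : V × V → ℕ) (t : V → ℕ) (o : V × V → Bool)
    (ho : ∀ v : V,
      t v ≤ ∑ e ∈ A.filter (fun e => (e.1 = v ∧ o e = true) ∨ (e.2 = v ∧ o e = false)), w e) :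
    ∃ S : Set (FDomV V), S ⊆ fdomVset A w ∧
      S.ncard ≤ ∑ e ∈ A, (2 * w e + 1) ∧
      ∀ v ∈ fdomVset A w, v ∉ S →
        fdomDemand t v ≤ (S ∩ {u | fdomAdj v u}).ncard := by
  classical
  have hfin : (fdomPick o '' (fdomK A w : Set _)).Finite := (Finset.finite_toSet _).image _
  have m1 : ∀ e ∈ A, (Sum.inr (e, Sum.inl (if o e then 0 else 1)) : FDomV V) ∈
      fdomPick o '' (fdomK A w : Set _) := fun e he =>
    ⟨⟨e, none⟩, by simpa [fdomK_none] using he, rfl⟩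
  have m2 : ∀ e ∈ A, ∀ s j, j < w e → (Sum.inr (e, Sum.inr (s, j,
      if o e then (if s then 1 else 0) else (if s then 2 else 1))) : FDomV V) ∈
      fdomPick o '' (fdomK A w : Set _) := fun e he s j hj =>
    ⟨⟨e, some (s, j)⟩, by simpa [fdomK_some] using ⟨he, hj⟩, rfl⟩
  refine ⟨fdomPick o '' (fdomK A w : Set _), ?_, ?_, ?_⟩
  · rintro _ ⟨⟨e, _ | ⟨s, j⟩⟩, hk, rfl⟩
    · exact (fdomK_none A w e).1 hk
    · exact (fdomK_some A w e s j).1 hk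
  · rw [← fdomK_card, ← Set.ncard_coe_finset (fdomK A w)]
    exact Set.ncard_image_le (Finset.finite_toSet _)
  · generalize fdomPick o '' (fdomK A w : Set _) = S at *
    have one : ∀ v : FDomV V, (∃ u ∈ S, fdomAdj v u) → 1 ≤ (S ∩ {u | fdomAdj v u}).ncard := by
      rintro v ⟨u, hu, h⟩
      exact (Set.ncard_pos (hfin.subset Set.inter_subset_left)).2 ⟨u, hu, h⟩
    rintro (v | ⟨e, i | ⟨s, j, p⟩⟩) hv hvS
    · refine (ho v).trans ?_
      set F := A.filter (fun e => (e.1 = v ∧ o e = true) ∨ (e.2 = v ∧ o e = false)) with hF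
      have hsub : (((F.sigma (fun e => Finset.range (w e))).image (fun q =>
        (Sum.inr (q.1, Sum.inr (!o q.1, q.2, if o q.1 then 0 else 2)) : FDomV V)) :
          Finset (FDomV V)) : Set (FDomV V)) ⊆ S ∩ {u | fdomAdj (Sum.inl v) u} := by
        intro u hu
        rw [Finset.coe_image, Set.mem_image] at hu
        obtain ⟨⟨e, j⟩, hq, rfl⟩ := hu
        have hq' : (e ∈ A ∧ ((e.1 = v ∧ o e = true) ∨ (e.2 = v ∧ o e = false))) ∧ j < w e := by
          simpa [hF] using hq
        obtain ⟨⟨he, h⟩, hj⟩ := hq'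
        have := m2 e he (!o e) j hj
        rcases h with ⟨rfl, h⟩ | ⟨rfl, h⟩
        · simp only [h] at this ⊢
          exact ⟨by simpa using this, by simp [fdomAdj, fdomBase]⟩
        · simp only [h] at this ⊢
          exact ⟨by simpa using this, by simp [fdomAdj, fdomBase]⟩
      have := Set.ncard_le_ncard hsub (hfin.subset Set.inter_subset_left)
      rw [Set.ncard_coe_finset, Finset.card_image_of_injective, Finset.card_sigma] at this
      · simpa using this
      · rintro ⟨e, j⟩ ⟨e', j'⟩ h
        simp only [Sum.inr.injEq, Prod.mk.injEq] at h
        obtain ⟨rfl, _, rfl, _⟩ := h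
        rfl
    · have he : e ∈ A := hv
      refine one _ ⟨_, m1 e he, ?_⟩
      have := m1 e he
      simp only [fdomAdj, fdomBase, fdomGadAdj]
      left
      refine ⟨trivial, ?_⟩
      rintro rfl
      exact hvS this
    · have he : e ∈ A ∧ j < w e := hv
      have a1 := m1 e he.1
      have a2 := m2 e he.1 s j he.2
      refine one _ ?_
      cases ho' : o e <;> cases s <;> fin_cases p <;> simp [ho'] at a1 a2 hvS <;>
      first
      | exact absurd a2 hvS
      | (refine ⟨_, a2, ?_⟩; simp [fdomAdj, fdomBase, fdomGadAdj]; done)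
      | (refine ⟨_, a1, ?_⟩; simp [fdomAdj, fdomBase, fdomGadAdj]; done)

theorem fdom_gadget_iff_min_outdegree_orientation
    {V : Type*} [Fintype V] [DecidableEq V]
    (A : Finset (V × V)) (w : V × V → ℕ) (t : V → ℕ)
    (hA : ∀ e ∈ A, e.1 ≠ e.2 ∧ (e.2, e.1) ∉ A)
    (hw : ∀ e ∈ A, 0 < w e) (ht : ∀ v, 0 < t v) :
    (∃ S : Set (FDomV V), S ⊆ fdomVset A w ∧
      S.ncard ≤ ∑ e ∈ A, (2 * w e + 1) ∧
      ∀ v ∈ fdomVset A w, v ∉ S →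
        fdomDemand t v ≤ (S ∩ {u | fdomAdj v u}).ncard) ↔
    (∃ o : V × V → Bool, ∀ v : V,
      t v ≤ ∑ e ∈ A.filter (fun e => (e.1 = v ∧ o e = true) ∨ (e.2 = v ∧ o e = false)), w e) := by
  constructor
  · rintro ⟨S, hS, hc, hd⟩
    exact fdom_forward A w t S hS hc hd
  · rintro ⟨o, ho⟩
    exact fdom_backward A w t o ho
end

section
/- Let G=(V,E) be an undirected graph with a positive integer weight w(e) on each edge and a positive integer target t(v) for each vertex. Construct a graph H as follows: start from the vertex set V; for each edge e = {x,y} of weight γ = w(e), add two adjacent new vertices a_e and b_e, add γ new vertices each adjacent exactly to x and to a_e, and add γ new vertices each adjacent exactly to b_e and to y (all gadget vertices for distinct edges are distinct and new). Define thresholds on H: a_e and b_e get threshold γ+1, every degree-2 new vertex gets threshold 1, and every original vertex v ∈ V gets threshold t(v). Then there is a set S ⊆ V(H) with |S| ≤ |E| whose activation process in H activates all of V(H), if and only if G has an orientation in which every vertex v has weighted outdegree at least t(v). -/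
/-!
The Target Set Selection gadget construction.

The input graph `G` is given by a finite vertex type `V` and an arc set
`A : Finset (V × V)` listing each undirected edge exactly once as an ordered pair
(loopless, and never both orientations), with positive weights `w` and positive
targets `t`.

The graph `H` has vertex type `TSSV V`: original vertices `Sum.inl x`, and, for
each edge `e = (x,y)`, gadget vertices `Sum.inr (e, g)` where `g = Sum.inl false`
is `a_e`, `g = Sum.inl true` is `b_e` (these two are adjacent), and
`g = Sum.inr (side, j)` is the `j`-th degree-2 vertex on side `side`
(`false`: adjacent exactly to `x` and `a_e`; `true`: adjacent exactly to `b_e` and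
`y`).  The vertex set of `H` is `tssVset A w` (indices `j < w e`).

Thresholds: `t v` on original vertices, `w e + 1` on `a_e` and `b_e`, and `1` on
the degree-2 vertices.  `activeSeq` is the activation process.

An orientation of `G` is a function `o : V × V → Bool`; `o e = true` means edge
`e` is directed from `e.1` to `e.2`.
-/

open Finset

/-- Gadget vertices for one edge. -/
abbrev TSSGad := Bool ⊕ (Bool × ℕ)

/-- Vertices of the constructed graph `H`. -/
abbrev TSSV (V : Type*) := V ⊕ ((V × V) × TSSGad)

/-- Base adjacency relation of `H` (to be symmetrised). -/
def tssBase {V : Type*} : TSSV V → TSSV V → Prop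
  | Sum.inl x, Sum.inr (e, Sum.inr (false, _)) => x = e.1
  | Sum.inl y, Sum.inr (e, Sum.inr (true, _)) => y = e.2
  | Sum.inr (e, Sum.inl s), Sum.inr (e', Sum.inl s') => e = e' ∧ s ≠ s'
  | Sum.inr (e, Sum.inl s), Sum.inr (e', Sum.inr (s', _)) => e = e' ∧ s = s'
  | _, _ => False

/-- Adjacency in `H`. -/
def tssAdj {V : Type*} (u v : TSSV V) : Prop := tssBase u v ∨ tssBase v u

/-- The vertex set of `H`. -/
def tssVset {V : Type*} (A : Finset (V × V)) (w : V × V → ℕ) : Set (TSSV V) :=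
  {u | match u with
       | Sum.inl _ => True
       | Sum.inr (e, Sum.inl _) => e ∈ A
       | Sum.inr (e, Sum.inr (_, j)) => e ∈ A ∧ j < w e}

/-- The threshold function of `H`. -/
def tssTh {V : Type*} (w : V × V → ℕ) (t : V → ℕ) : TSSV V → ℕ
  | Sum.inl v => t v
  | Sum.inr (e, Sum.inl _) => w e + 1
  | Sum.inr (_, Sum.inr _) => 1

/-- The activation process on vertex set `Vs` starting with `S`: a vertex becomes
active once at least its threshold many of its neighbours are active. -/
def activeSeq {α : Type*} (Adj : α → α → Prop) (th : α → ℕ) (Vs : Set α)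
    (S : Set α) : ℕ → Set α
  | 0 => S
  | n + 1 => activeSeq Adj th Vs S n ∪
      {v | v ∈ Vs ∧ th v ≤ ((activeSeq Adj th Vs S n) ∩ {u | Adj v u}).ncard}

theorem aux_adj_orig {V : Type*} (v : V) (u : TSSV V) :
    tssAdj (Sum.inl v) u ↔ ∃ e s j, u = Sum.inr (e, Sum.inr (s, j)) ∧ v = cond s e.2 e.1 := by
  rcases u with x | ⟨e, s | ⟨s, j⟩⟩
  · simp [tssAdj, tssBase]
  · cases s <;> simp [tssAdj, tssBase]
  · cases s <;> simp [tssAdj, tssBase]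

theorem aux_adj_mid {V : Type*} (e : V × V) (s : Bool) (u : TSSV V) :
    tssAdj (Sum.inr (e, Sum.inl s)) u ↔
      u = Sum.inr (e, Sum.inl (!s)) ∨ ∃ j, u = Sum.inr (e, Sum.inr (s, j)) := by
  rcases u with x | ⟨e', s' | ⟨s', j⟩⟩
  · simp [tssAdj, tssBase]
  · cases s <;> cases s' <;> simp [tssAdj, tssBase, eq_comm]
  · cases s <;> cases s' <;> simp [tssAdj, tssBase, eq_comm]

theorem aux_adj_leaf {V : Type*} (e : V × V) (s : Bool) (j : ℕ) (u : TSSV V) :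
    tssAdj (Sum.inr (e, Sum.inr (s, j))) u ↔
      u = Sum.inr (e, Sum.inl s) ∨ u = Sum.inl (cond s e.2 e.1) := by
  rcases u with x | ⟨e', s' | ⟨s', j'⟩⟩
  · cases s <;> simp [tssAdj, tssBase]
  · cases s <;> cases s' <;> simp [tssAdj, tssBase]
  · cases s <;> cases s' <;> simp [tssAdj, tssBase]

theorem aux_finite {V : Type*} [Fintype V] [DecidableEq V]
    (A : Finset (V × V)) (w : V × V → ℕ) : (tssVset A w).Finite := by
  have h1 : (Set.range (Sum.inl : V → TSSV V)).Finite := Set.finite_range _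
  have h2 : (Set.range (fun p : (V × V) × Bool => (Sum.inr (p.1, Sum.inl p.2) : TSSV V))).Finite :=
    Set.finite_range _
  have h3 : ((fun p : (V × V) × (Bool × ℕ) => (Sum.inr (p.1, Sum.inr p.2) : TSSV V)) ''
      (Set.univ ×ˢ (Set.univ ×ˢ Set.Iio (∑ e ∈ A, w e)))).Finite :=
    (Set.finite_univ.prod (Set.finite_univ.prod (Set.finite_Iio _))).image _
  refine ((h1.union h2).union h3).subset ?_
  rintro (x | ⟨e, s | ⟨s, j⟩⟩) hu
  · exact Or.inl (Or.inl ⟨x, rfl⟩)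
  · exact Or.inl (Or.inr ⟨(e, s), rfl⟩)
  · refine Or.inr ⟨(e, s, j), ⟨trivial, trivial, ?_⟩, rfl⟩
    obtain ⟨he, hj⟩ : e ∈ A ∧ j < w e := hu
    exact lt_of_lt_of_le hj (Finset.single_le_sum (f := w) (fun _ _ => Nat.zero_le _) he)

theorem aux_active_sub {α : Type*} (Adj : α → α → Prop) (th : α → ℕ) (Vs S : Set α)
    (h : S ⊆ Vs) (n : ℕ) : activeSeq Adj th Vs S n ⊆ Vs := by
  induction n with
  | zero => exact h
  | succ n ih => exact Set.union_subset ih (fun v hv => hv.1)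

/-- The set of degree-2 vertices on the chosen side of the edges in `B`. -/
def auxLeaves {V : Type*} (w : V × V → ℕ) (o : V × V → Bool) (B : Finset (V × V)) :
    Set (TSSV V) :=
  {u | ∃ e ∈ B, ∃ j < w e, u = Sum.inr (e, Sum.inr (!(o e), j))}

theorem aux_leaves_card {V : Type*} [DecidableEq V] (w : V × V → ℕ) (o : V × V → Bool)
    (B : Finset (V × V)) :
    (auxLeaves w o B).Finite ∧ (auxLeaves w o B).ncard = ∑ e ∈ B, w e := by
  have h : auxLeaves w o B = (((B.sigma (fun e => Finset.range (w e))).image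
      (fun p : (Σ _ : V × V, ℕ) =>
        (Sum.inr (p.1, Sum.inr (!(o p.1), p.2)) : TSSV V)) : Finset (TSSV V)) : Set (TSSV V)) := by
    ext u
    simp only [auxLeaves, Set.mem_setOf_eq, Finset.coe_image, Set.mem_image, Finset.mem_coe,
      Finset.mem_sigma, Finset.mem_range]
    constructor
    · rintro ⟨e, he, j, hj, rfl⟩
      exact ⟨⟨e, j⟩, ⟨he, hj⟩, rfl⟩
    · rintro ⟨⟨e, j⟩, ⟨he, hj⟩, rfl⟩
      exact ⟨e, he, j, hj, rfl⟩
  rw [h]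
  refine ⟨Finset.finite_toSet _, ?_⟩
  rw [Set.ncard_coe_finset, Finset.card_image_of_injective, Finset.card_sigma]
  · simp
  · rintro ⟨e, j⟩ ⟨e', j'⟩ hh
    simp only [Sum.inr.injEq, Prod.mk.injEq] at hh
    obtain ⟨rfl, -, rfl⟩ := hh
    rfl

/-- The degree-2 vertices on side `s` of the edge `e`. -/
def auxSide {V : Type*} (w : V × V → ℕ) (e : V × V) (s : Bool) : Set (TSSV V) :=
  (fun j => (Sum.inr (e, Sum.inr (s, j)) : TSSV V)) '' Set.Iio (w e)

theorem aux_side_card {V : Type*} (w : V × V → ℕ) (e : V × V) (s : Bool) :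
    (auxSide w e s).Finite ∧ (auxSide w e s).ncard = w e := by
  refine ⟨(Set.finite_Iio _).image _, ?_⟩
  rw [auxSide, Set.ncard_image_of_injective]
  · rw [← Finset.coe_Iio, Set.ncard_coe_finset]; simp
  · intro a b h
    simpa using h

theorem aux_hit {V : Type*} (A : Finset (V × V)) (w : V × V → ℕ) (t : V → ℕ)
    (S : Set (TSSV V)) (hS : S ⊆ tssVset A w) (e : V × V)
    (hno : ∀ g, (Sum.inr (e, g) : TSSV V) ∉ S) (n : ℕ) (s : Bool) :
    (Sum.inr (e, Sum.inl s) : TSSV V) ∉ activeSeq tssAdj (tssTh w t) (tssVset A w) S n := by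
  induction n generalizing s with
  | zero => exact hno _
  | succ n ih =>
    rintro (h | ⟨-, h⟩)
    · exact ih s h
    · have hsub : activeSeq tssAdj (tssTh w t) (tssVset A w) S n ∩
          {u | tssAdj (Sum.inr (e, Sum.inl s)) u} ⊆ auxSide w e s := by
        rintro u ⟨hu, hadj⟩
        rcases (aux_adj_mid e s u).1 hadj with rfl | ⟨j, rfl⟩
        · exact absurd hu (ih _)
        · exact ⟨j, (aux_active_sub _ _ _ _ hS n hu).2, rfl⟩
      have h1 := Set.ncard_le_ncard hsub (aux_side_card w e s).1
      rw [(aux_side_card w e s).2] at h1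
      have h2 : w e + 1 ≤ _ := h
      omega

/-- The side of a gadget vertex. -/
def auxGSide : TSSGad → Bool
  | Sum.inl s => s
  | Sum.inr (s, _) => s

theorem aux_late {V : Type*} (A : Finset (V × V)) (w : V × V → ℕ) (t : V → ℕ)
    (hw : ∀ e ∈ A, 0 < w e) (S : Set (TSSV V)) (e : V × V) (he : e ∈ A) (s : Bool)
    (hno : ∀ g, auxGSide g = s → (Sum.inr (e, g) : TSSV V) ∉ S) (n : ℕ)
    (hn : (Sum.inl (cond s e.2 e.1) : TSSV V) ∉
      activeSeq tssAdj (tssTh w t) (tssVset A w) S n) (g : TSSGad) (hg : auxGSide g = s) :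
    (Sum.inr (e, g) : TSSV V) ∉ activeSeq tssAdj (tssTh w t) (tssVset A w) S n := by
  induction n generalizing g with
  | zero => exact hno g hg
  | succ n ih =>
    have hn' : (Sum.inl (cond s e.2 e.1) : TSSV V) ∉
      activeSeq tssAdj (tssTh w t) (tssVset A w) S n := fun h => hn (Or.inl h)
    have ih := ih hn'
    rintro (h | ⟨-, h⟩)
    · exact ih g hg h
    · rcases g with s' | ⟨s', j⟩
      · obtain rfl : s' = s := hg
        have hsub : activeSeq tssAdj (tssTh w t) (tssVset A w) S n ∩
            {u | tssAdj (Sum.inr (e, Sum.inl s')) u} ⊆ {Sum.inr (e, Sum.inl (!s'))} := by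
          rintro u ⟨hu, hadj⟩
          rcases (aux_adj_mid e s' u).1 hadj with rfl | ⟨j, rfl⟩
          · rfl
          · exact absurd hu (ih _ rfl)
        have h1 := Set.ncard_le_ncard hsub (Set.finite_singleton _)
        rw [Set.ncard_singleton] at h1
        have h2 : w e + 1 ≤ _ := h
        have := hw e he
        omega
      · obtain rfl : s' = s := hg
        have hsub : activeSeq tssAdj (tssTh w t) (tssVset A w) S n ∩
            {u | tssAdj (Sum.inr (e, Sum.inr (s', j))) u} = ∅ := by
          apply Set.eq_empty_of_forall_notMem
          rintro u ⟨hu, hadj⟩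
          rcases (aux_adj_leaf e s' j u).1 hadj with rfl | rfl
          · exact absurd hu (ih _ rfl)
          · exact hn' hu
        rw [hsub, Set.ncard_empty] at h
        have h2 : 1 ≤ 0 := h
        omega

theorem aux_forward {V : Type*} [Fintype V] [DecidableEq V]
    (A : Finset (V × V)) (w : V × V → ℕ) (t : V → ℕ)
    (hw : ∀ e ∈ A, 0 < w e)
    (S : Set (TSSV V)) (hS : S ⊆ tssVset A w) (hc : S.ncard ≤ A.card) (m : ℕ)
    (hm : tssVset A w ⊆ activeSeq tssAdj (tssTh w t) (tssVset A w) S m) :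
    ∃ o : V × V → Bool, ∀ v : V,
      t v ≤ ∑ e ∈ A.filter (fun e => (e.1 = v ∧ o e = true) ∨ (e.2 = v ∧ o e = false)), w e := by
  have hit : ∀ e, ∃ g, e ∈ A → (Sum.inr (e, g) : TSSV V) ∈ S := by
    intro e
    by_contra! hcon
    have he : e ∈ A := (hcon (Sum.inl true)).1
    refine aux_hit A w t S hS e (fun g => (hcon g).2) m true (hm ?_)
    exact he
  choose g hg using hit
  have hinj : Function.Injective (fun e : V × V => (Sum.inr (e, g e) : TSSV V)) := by
    intro a b h
    simp only [Sum.inr.injEq, Prod.mk.injEq] at h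
    exact h.1
  have hSeq : (fun e : V × V => (Sum.inr (e, g e) : TSSV V)) '' (A : Set (V × V)) = S := by
    apply Set.eq_of_subset_of_ncard_le
    · rintro _ ⟨e, he, rfl⟩
      exact hg e he
    · rw [Set.ncard_image_of_injective _ hinj, Set.ncard_coe_finset]
      exact hc
    · exact (aux_finite A w).subset hS
  refine ⟨fun e => !(auxGSide (g e)), fun v => ?_⟩
  have hex : ∃ n, (Sum.inl v : TSSV V) ∈ activeSeq tssAdj (tssTh w t) (tssVset A w) S n :=
    ⟨m, hm trivial⟩
  classical
  obtain ⟨n, hn, hn1⟩ : ∃ n, (Sum.inl v : TSSV V) ∉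
      activeSeq tssAdj (tssTh w t) (tssVset A w) S n ∧ (Sum.inl v : TSSV V) ∈
      activeSeq tssAdj (tssTh w t) (tssVset A w) S (n + 1) := by
    have h0 : Nat.find hex ≠ 0 := by
      intro h0
      have h1 := Nat.find_spec hex
      rw [h0] at h1
      have h2 : (Sum.inl v : TSSV V) ∈ S := h1
      rw [← hSeq] at h2
      obtain ⟨e, -, h3⟩ := h2
      simp at h3
    obtain ⟨k, hk⟩ := Nat.exists_eq_succ_of_ne_zero h0
    refine ⟨k, Nat.find_min hex (by omega), ?_⟩
    have h1 := Nat.find_spec hex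
    rwa [hk] at h1
  rcases hn1 with h | ⟨-, h⟩
  · exact absurd h hn
  have h : t v ≤ _ := h
  refine h.trans ?_
  rw [← (aux_leaves_card w (fun e => !(auxGSide (g e))) _).2]
  refine Set.ncard_le_ncard ?_ (aux_leaves_card w _ _).1
  rintro u ⟨hu, hadj⟩
  obtain ⟨e, s, j, rfl, hv⟩ := (aux_adj_orig v u).1 hadj
  obtain ⟨heA, hj⟩ : e ∈ A ∧ j < w e := aux_active_sub _ _ _ _ hS n hu
  have hs : auxGSide (g e) = s := by
    by_contra hne
    refine aux_late A w t hw S e heA s ?_ n (hv ▸ hn) (Sum.inr (s, j)) rfl hu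
    intro g' hg' hmem
    rw [← hSeq] at hmem
    obtain ⟨e', -, h3⟩ := hmem
    simp only [Sum.inr.injEq, Prod.mk.injEq] at h3
    obtain ⟨rfl, rfl⟩ := h3
    exact hne hg'
  refine ⟨e, ?_, j, hj, ?_⟩
  · simp only [Finset.mem_filter, heA, true_and, hs]
    cases s <;> simp [hv]
  · simp [hs]

theorem aux_step {α : Type*} (Adj : α → α → Prop) (th : α → ℕ) (Vs S : Set α)
    (hfin : Vs.Finite) (hS : S ⊆ Vs) (n : ℕ) (v : α) (hv : v ∈ Vs) (T : Set α)
    (hT : T ⊆ activeSeq Adj th Vs S n) (hadj : ∀ u ∈ T, Adj v u) (hc : th v ≤ T.ncard) :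
    v ∈ activeSeq Adj th Vs S (n + 1) := by
  refine Or.inr ⟨hv, hc.trans (Set.ncard_le_ncard (fun u hu => ⟨hT hu, hadj u hu⟩) ?_)⟩
  exact (hfin.subset (aux_active_sub Adj th Vs S hS n)).subset Set.inter_subset_left

theorem aux_backward {V : Type*} [Fintype V] [DecidableEq V]
    (A : Finset (V × V)) (w : V × V → ℕ) (t : V → ℕ) (o : V × V → Bool)
    (ho : ∀ v : V,
      t v ≤ ∑ e ∈ A.filter (fun e => (e.1 = v ∧ o e = true) ∨ (e.2 = v ∧ o e = false)), w e) :
    ∃ S : Set (TSSV V), S ⊆ tssVset A w ∧ S.ncard ≤ A.card ∧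
      ∃ j : ℕ, tssVset A w ⊆ activeSeq tssAdj (tssTh w t) (tssVset A w) S j := by
  set S : Set (TSSV V) :=
    (fun e : V × V => (Sum.inr (e, Sum.inl (!(o e))) : TSSV V)) '' (A : Set (V × V)) with hSdef
  have hS : S ⊆ tssVset A w := by
    rintro _ ⟨e, he, rfl⟩
    exact he
  have hfin := aux_finite A w
  have key := aux_step tssAdj (tssTh w t) (tssVset A w) S hfin hS
  have mono : ∀ n, activeSeq tssAdj (tssTh w t) (tssVset A w) S n ⊆
      activeSeq tssAdj (tssTh w t) (tssVset A w) S (n + 1) := fun n u hu => Or.inl hu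
  have h0 : ∀ e ∈ A, (Sum.inr (e, Sum.inl (!(o e))) : TSSV V) ∈
      activeSeq tssAdj (tssTh w t) (tssVset A w) S 0 := fun e he => ⟨e, he, rfl⟩
  have h1 : ∀ e ∈ A, ∀ j < w e, (Sum.inr (e, Sum.inr (!(o e), j)) : TSSV V) ∈
      activeSeq tssAdj (tssTh w t) (tssVset A w) S 1 := by
    intro e he j hj
    refine key 0 _ ⟨he, hj⟩ {Sum.inr (e, Sum.inl (!(o e)))} ?_ ?_ ?_
    · rintro _ rfl
      exact h0 e he
    · rintro _ rfl
      exact (aux_adj_leaf _ _ _ _).2 (Or.inl rfl)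
    · simp [tssTh]
  have h2 : ∀ v, (Sum.inl v : TSSV V) ∈
      activeSeq tssAdj (tssTh w t) (tssVset A w) S 2 := by
    intro v
    refine key 1 _ trivial (auxLeaves w o (A.filter
      (fun e => (e.1 = v ∧ o e = true) ∨ (e.2 = v ∧ o e = false)))) ?_ ?_ ?_
    · rintro _ ⟨e, he, j, hj, rfl⟩
      exact h1 e (Finset.mem_filter.1 he).1 j hj
    · rintro _ ⟨e, he, j, hj, rfl⟩
      refine (aux_adj_orig _ _).2 ⟨e, _, j, rfl, ?_⟩
      rcases (Finset.mem_filter.1 he).2 with ⟨h, h'⟩ | ⟨h, h'⟩ <;> simp [h, h']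
    · rw [(aux_leaves_card _ _ _).2]
      exact ho v
  have h3 : ∀ e ∈ A, ∀ s, ∀ j < w e, (Sum.inr (e, Sum.inr (s, j)) : TSSV V) ∈
      activeSeq tssAdj (tssTh w t) (tssVset A w) S 3 := by
    intro e he s j hj
    refine key 2 _ ⟨he, hj⟩ {Sum.inl (cond s e.2 e.1)} ?_ ?_ ?_
    · rintro _ rfl
      exact h2 _
    · rintro _ rfl
      exact (aux_adj_leaf _ _ _ _).2 (Or.inr rfl)
    · simp [tssTh]
  have h4 : ∀ e ∈ A, ∀ s, (Sum.inr (e, Sum.inl s) : TSSV V) ∈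
      activeSeq tssAdj (tssTh w t) (tssVset A w) S 4 := by
    intro e he s
    by_cases hs : s = !(o e)
    · subst hs
      exact mono 3 (mono 2 (mono 1 (mono 0 (h0 e he))))
    · have hs' : (!s) = !(o e) := by
        revert hs
        cases s <;> cases o e <;> simp
      refine key 3 _ he (insert (Sum.inr (e, Sum.inl (!s))) (auxSide w e s)) ?_ ?_ ?_
      · rintro u (rfl | ⟨j, hj, rfl⟩)
        · rw [hs']
          exact mono 2 (mono 1 (mono 0 (h0 e he)))
        · exact h3 e he s j hj
      · rintro u (rfl | ⟨j, hj, rfl⟩)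
        · exact (aux_adj_mid _ _ _).2 (Or.inl rfl)
        · exact (aux_adj_mid _ _ _).2 (Or.inr ⟨j, rfl⟩)
      · rw [Set.ncard_insert_of_notMem _ (aux_side_card w e s).1, (aux_side_card w e s).2]
        · exact le_rfl
        · rintro ⟨j, -, h⟩
          simp at h
  refine ⟨S, hS, ?_, 4, ?_⟩
  · rw [hSdef]
    refine (Set.ncard_image_le (Finset.finite_toSet A)).trans ?_
    rw [Set.ncard_coe_finset]
  · rintro (x | ⟨e, s | ⟨s, j⟩⟩) hu
    · exact mono 3 (mono 2 (h2 x))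
    · exact h4 e hu s
    · exact mono 3 (h3 e hu.1 s j hu.2)

theorem tss_gadget_iff_min_outdegree_orientation
    {V : Type*} [Fintype V] [DecidableEq V]
    (A : Finset (V × V)) (w : V × V → ℕ) (t : V → ℕ)
    (hA : ∀ e ∈ A, e.1 ≠ e.2 ∧ (e.2, e.1) ∉ A)
    (hw : ∀ e ∈ A, 0 < w e) (ht : ∀ v, 0 < t v) :
    (∃ S : Set (TSSV V), S ⊆ tssVset A w ∧ S.ncard ≤ A.card ∧
      ∃ j : ℕ, tssVset A w ⊆ activeSeq tssAdj (tssTh w t) (tssVset A w) S j) ↔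
    (∃ o : V × V → Bool, ∀ v : V,
      t v ≤ ∑ e ∈ A.filter (fun e => (e.1 = v ∧ o e = true) ∨ (e.2 = v ∧ o e = false)), w e) := by
  constructor
  · rintro ⟨S, hS, hc, m, hm⟩
    exact aux_forward A w t hw S hS hc m hm
  · rintro ⟨o, ho⟩
    exact aux_backward A w t o ho
end

section
/- Let G=(V,E) be an undirected graph with a positive integer weight w(e) on each edge and a positive integer target t(v) for each vertex. Construct a graph H as follows: start from the vertex set V; for each edge e = {x,y} of weight γ = w(e), add new vertices a_e and b_e joined by an edge, add γ internally disjoint paths from x to a_e each with exactly two new internal vertices, and add γ internally disjoint paths from b_e to y each with exactly two new internal vertices (all gadget vertices for distinct edges are distinct and new); finally, add to each original vertex v ∈ V one new pendant neighbour. Set capacities: every new vertex gets capacity equal to its degree in H, and every original vertex v ∈ V gets capacity t(v)+1. Then H has a capacitated vertex cover of size at most |V| + Σ_{e∈E}(2·w(e)+1) if and only if G has an orientation in which every vertex v has weighted outdegree at most t(v). -/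
/-!
The Capacitated Vertex Cover gadget construction.

The input graph `G` is given by a finite vertex type `V` and an arc set
`A : Finset (V × V)` listing each undirected edge exactly once as an ordered pair
(loopless, and never both orientations), with positive weights `w` and positive
targets `t`.

The graph `H` has vertex type `CVCV V`:
* `Sum.inl (Sum.inl x)` is the original vertex `x`;
* `Sum.inl (Sum.inr x)` is the pendant neighbour added to `x`;
* for each edge `e = (x,y)`, `Sum.inr (e, Sum.inl false) = a_e` and
  `Sum.inr (e, Sum.inl true) = b_e` (joined by an edge), and
  `Sum.inr (e, Sum.inr (side, j, pos))` is the internal vertex at position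
  `pos : Fin 2` of the `j`-th path on side `side` (`false`: the paths
  `x - u₀ - u₁ - a_e`; `true`: the paths `b_e - u₀ - u₁ - y`).
The vertex set of `H` is `cvcVset A w` (path indices `j < w e`).

Edges of `H` are represented (each exactly once) by ordered pairs satisfying the
base relation `cvcBase`; an edge assignment is a function `g` to `Bool` choosing
for an edge `p` its first endpoint (if `g p = true`) or its second.

Capacities: every new vertex gets its degree (`1` for pendants, `2` for internal
path vertices, `w e + 1` for `a_e` and `b_e`), and original vertices get `t v + 1`.

An orientation of `G` is a function `o : V × V → Bool`; `o e = true` means edge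
`e` is directed from `e.1` to `e.2`.
-/

open Finset

/-- Gadget vertices for one edge. -/
abbrev CVCGad := Bool ⊕ (Bool × ℕ × Fin 2)

/-- Vertices of the constructed graph `H`. -/
abbrev CVCV (V : Type*) := (V ⊕ V) ⊕ ((V × V) × CVCGad)

/-- Base adjacency within one edge gadget (each gadget-internal edge listed once). -/
def cvcGadBase : CVCGad → CVCGad → Prop
  | Sum.inl s, Sum.inl s' => s = false ∧ s' = true
  | Sum.inl s, Sum.inr (s', _, p) =>
      s = s' ∧ ((s = false ∧ (p : ℕ) = 1) ∨ (s = true ∧ (p : ℕ) = 0))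
  | Sum.inr (s, j, p), Sum.inr (s', j', p') =>
      s = s' ∧ j = j' ∧ (p : ℕ) = 0 ∧ (p' : ℕ) = 1
  | _, _ => False

/-- Base adjacency relation of `H`; every edge of `H` is represented by exactly
one ordered pair satisfying this relation. -/
def cvcBase {V : Type*} : CVCV V → CVCV V → Prop
  | Sum.inl (Sum.inl x), Sum.inl (Sum.inr x') => x = x'
  | Sum.inl (Sum.inl x), Sum.inr (e, Sum.inr (false, _, p)) => x = e.1 ∧ (p : ℕ) = 0
  | Sum.inl (Sum.inl y), Sum.inr (e, Sum.inr (true, _, p)) => y = e.2 ∧ (p : ℕ) = 1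
  | Sum.inr (e, g), Sum.inr (e', g') => e = e' ∧ cvcGadBase g g'
  | _, _ => False

/-- The vertex set of `H`. -/
def cvcVset {V : Type*} (A : Finset (V × V)) (w : V × V → ℕ) : Set (CVCV V) :=
  {u | match u with
       | Sum.inl _ => True
       | Sum.inr (e, Sum.inl _) => e ∈ A
       | Sum.inr (e, Sum.inr (_, j, _)) => e ∈ A ∧ j < w e}

/-- The edge set of `H`, each edge represented by one ordered pair. -/
def cvcEdges {V : Type*} (A : Finset (V × V)) (w : V × V → ℕ) :
    Set (CVCV V × CVCV V) :=
  {p | p.1 ∈ cvcVset A w ∧ p.2 ∈ cvcVset A w ∧ cvcBase p.1 p.2}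

/-- The capacities of the vertices of `H`. -/
def cvcCap {V : Type*} (w : V × V → ℕ) (t : V → ℕ) : CVCV V → ℕ
  | Sum.inl (Sum.inl v) => t v + 1
  | Sum.inl (Sum.inr _) => 1
  | Sum.inr (e, Sum.inl _) => w e + 1
  | Sum.inr (_, Sum.inr _) => 2

/-- Index of the must-hit group a vertex belongs to. -/
def cvcPhi {V : Type*} : CVCV V → V ⊕ (Σ _ : V × V, Option (Bool × ℕ))
  | Sum.inl (Sum.inl x) => Sum.inl x
  | Sum.inl (Sum.inr x) => Sum.inl x
  | Sum.inr (e, Sum.inl _) => Sum.inr ⟨e, none⟩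
  | Sum.inr (e, Sum.inr (s, j, _)) => Sum.inr ⟨e, some (s, j)⟩

/-- The finite set of all groups. -/
def cvcIdx {V : Type*} [Fintype V] (A : Finset (V × V)) (w : V × V → ℕ) :
    Finset (V ⊕ (Σ _ : V × V, Option (Bool × ℕ))) :=
  (Finset.univ : Finset V).disjSum
    (A.sigma fun e => Finset.insertNone ((Finset.univ : Finset Bool) ×ˢ Finset.range (w e)))

theorem cvcIdx_card {V : Type*} [Fintype V] (A : Finset (V × V)) (w : V × V → ℕ) :
    (cvcIdx A w).card = Fintype.card V + ∑ e ∈ A, (2 * w e + 1) := by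
  simp [cvcIdx, Finset.card_disjSum, Finset.card_sigma]

theorem cvcPhi_mem {V : Type*} [Fintype V] (A : Finset (V × V)) (w : V × V → ℕ)
    (u : CVCV V) (hu : u ∈ cvcVset A w) : cvcPhi u ∈ cvcIdx A w := by
  rcases u with (x | x) | ⟨e, s | ⟨s, j, p⟩⟩ <;>
    simp_all [cvcPhi, cvcIdx, cvcVset]

theorem cvcVset_finite {V : Type*} [Fintype V] (A : Finset (V × V)) (w : V × V → ℕ) :
    (cvcVset A w).Finite := by
  classical
  refine Set.Finite.of_finite_fibers cvcPhi
    ((cvcIdx A w).finite_toSet.subset ?_) ?_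
  · rintro _ ⟨u, hu, rfl⟩
    exact cvcPhi_mem A w u hu
  · rintro i -
    rcases i with x | ⟨e, _ | ⟨s, j⟩⟩
    · refine Set.Finite.subset (Set.toFinite
        {(Sum.inl (Sum.inl x) : CVCV V), Sum.inl (Sum.inr x)}) ?_
      rintro ((y | y) | ⟨e, s | ⟨s, j, p⟩⟩) ⟨-, h⟩ <;> simp_all [cvcPhi]
    · refine Set.Finite.subset (Set.toFinite
        {(Sum.inr (e, Sum.inl true) : CVCV V), Sum.inr (e, Sum.inl false)}) ?_
      rintro ((y | y) | ⟨e, s | ⟨s, j, p⟩⟩) ⟨-, h⟩ <;> simp_all [cvcPhi]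
    · refine Set.Finite.subset (Set.toFinite
        {(Sum.inr (e, Sum.inr (s, j, 0)) : CVCV V), Sum.inr (e, Sum.inr (s, j, 1))}) ?_
      rintro ((y | y) | ⟨e, s | ⟨s, j, p⟩⟩) ⟨-, h⟩ <;> simp_all [cvcPhi]
      omega

theorem cvcEdges_finite {V : Type*} [Fintype V] (A : Finset (V × V)) (w : V × V → ℕ) :
    (cvcEdges A w).Finite := by
  refine ((cvcVset_finite A w).prod (cvcVset_finite A w)).subset ?_
  rintro ⟨a, b⟩ ⟨h1, h2, -⟩
  exact ⟨h1, h2⟩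

/-- The edge of `H` from the tail of the oriented edge `e` to its `j`-th path. -/
def cvcTail {V : Type*} (o : V × V → Bool) (q : Σ _ : V × V, ℕ) : CVCV V × CVCV V :=
  if o q.1 = true then (Sum.inl (Sum.inl q.1.1), Sum.inr (q.1, Sum.inr (false, q.2, 0)))
  else (Sum.inl (Sum.inl q.1.2), Sum.inr (q.1, Sum.inr (true, q.2, 1)))

theorem cvcTail_injective {V : Type*} (o : V × V → Bool) :
    Function.Injective (cvcTail o) := by
  rintro ⟨e, j⟩ ⟨e', j'⟩ h
  unfold cvcTail at h
  dsimp only at h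
  split_ifs at h <;> simp_all

theorem cvc_forward {V : Type*} [Fintype V] [DecidableEq V]
    (A : Finset (V × V)) (w : V × V → ℕ) (t : V → ℕ)
    (S : Set (CVCV V)) (g : CVCV V × CVCV V → Bool)
    (hS : S ⊆ cvcVset A w)
    (hcard : S.ncard ≤ Fintype.card V + ∑ e ∈ A, (2 * w e + 1))
    (hcov : ∀ p ∈ cvcEdges A w, if g p = true then p.1 ∈ S else p.2 ∈ S)
    (hcap : ∀ v ∈ S,
        ({p | p ∈ cvcEdges A w ∧
          ((g p = true ∧ p.1 = v) ∨ (g p = false ∧ p.2 = v))}).ncard ≤ cvcCap w t v) :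
    ∃ o : V × V → Bool, ∀ v : V,
      (∑ e ∈ A.filter (fun e => (e.1 = v ∧ o e = true) ∨ (e.2 = v ∧ o e = false)), w e)
        ≤ t v := by
  classical
  have hfin : S.Finite := (cvcVset_finite A w).subset hS
  have hor : ∀ p ∈ cvcEdges A w, p.1 ∈ S ∨ p.2 ∈ S := by
    intro p hp
    have := hcov p hp
    split_ifs at this <;> simp [this]
  have hsurj : ∀ i ∈ cvcIdx A w, ∃ u ∈ S, cvcPhi u = i := by
    intro i hi
    rcases i with x | ⟨e, _ | ⟨s, j⟩⟩
    · rcases hor (Sum.inl (Sum.inl x), Sum.inl (Sum.inr x))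
        (by simp [cvcEdges, cvcVset, cvcBase]) with h | h
      · exact ⟨_, h, rfl⟩
      · exact ⟨_, h, rfl⟩
    · have he : e ∈ A := by simpa [cvcIdx] using hi
      rcases hor (Sum.inr (e, Sum.inl false), Sum.inr (e, Sum.inl true))
        (by simp [cvcEdges, cvcVset, cvcBase, cvcGadBase, he]) with h | h
      · exact ⟨_, h, rfl⟩
      · exact ⟨_, h, rfl⟩
    · have he : e ∈ A ∧ j < w e := by simpa [cvcIdx] using hi
      rcases hor (Sum.inr (e, Sum.inr (s, j, 0)), Sum.inr (e, Sum.inr (s, j, 1)))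
        (by simp [cvcEdges, cvcVset, cvcBase, cvcGadBase, he]) with h | h
      · exact ⟨_, h, rfl⟩
      · exact ⟨_, h, rfl⟩
  have hinj : ∀ u ∈ S, ∀ u' ∈ S, cvcPhi u = cvcPhi u' → u = u' := by
    intro u hu u' hu' h
    refine Finset.inj_on_of_surj_on_of_card_le (s := hfin.toFinset) (t := cvcIdx A w)
      (fun a _ => cvcPhi a) (fun a ha => cvcPhi_mem A w a (hS (by simpa using ha)))
      (fun b hb => ?_) ?_ (by simpa using hu) (by simpa using hu') h
    · obtain ⟨a, ha, hab⟩ := hsurj b hb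
      exact ⟨a, by simpa using ha, hab⟩
    · rw [cvcIdx_card, ← Set.ncard_eq_toFinset_card S hfin]
      exact hcard
  -- the edges forced on the original vertices
  let o : V × V → Bool := fun e => decide ((Sum.inr (e, Sum.inl false) : CVCV V) ∉ S)
  have hE : ∀ e ∈ A, ∀ j < w e, cvcTail o ⟨e, j⟩ ∈ cvcEdges A w := by
    intro e he j hj
    unfold cvcTail
    split_ifs <;> simp [cvcEdges, cvcVset, cvcBase, he, hj]
  have hforce : ∀ e ∈ A, ∀ j < w e, (cvcTail o ⟨e, j⟩).2 ∉ S := by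
    intro e he j hj
    unfold cvcTail
    split_ifs with ho
    · have ha : (Sum.inr (e, Sum.inl false) : CVCV V) ∉ S := by simpa [o] using ho
      have h1 := (hor (Sum.inr (e, Sum.inl false), Sum.inr (e, Sum.inr (false, j, 1)))
        (by simp [cvcEdges, cvcVset, cvcBase, cvcGadBase, he, hj])).resolve_left ha
      intro h0
      have := hinj _ h0 _ h1 rfl
      simp at this
    · have ha : (Sum.inr (e, Sum.inl false) : CVCV V) ∈ S := by simpa [o] using ho
      have hb : (Sum.inr (e, Sum.inl true) : CVCV V) ∉ S := by
        intro hb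
        have := hinj _ ha _ hb rfl
        simp at this
      have h1 := (hor (Sum.inr (e, Sum.inl true), Sum.inr (e, Sum.inr (true, j, 0)))
        (by simp [cvcEdges, cvcVset, cvcBase, cvcGadBase, he, hj])).resolve_left hb
      intro h0
      have := hinj _ h0 _ h1 rfl
      simp at this
  have hg : ∀ p ∈ cvcEdges A w, p.2 ∉ S → g p = true := by
    intro p hp h
    by_contra hgp
    have := hcov p hp
    rw [if_neg hgp] at this
    exact h this
  refine ⟨o, fun v => ?_⟩
  set F := A.filter (fun e => (e.1 = v ∧ o e = true) ∨ (e.2 = v ∧ o e = false)) with hF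
  by_cases hv : (Sum.inl (Sum.inl v) : CVCV V) ∈ S
  · have hpend : (Sum.inl (Sum.inr v) : CVCV V) ∉ S := by
      intro h
      have := hinj _ hv _ h rfl
      simp at this
    have hc := hcap _ hv
    let T : Finset (CVCV V × CVCV V) :=
      insert (Sum.inl (Sum.inl v), Sum.inl (Sum.inr v))
        ((F.sigma fun e => Finset.range (w e)).image (cvcTail o))
    have hT : T.card = (∑ e ∈ F, w e) + 1 := by
      rw [Finset.card_insert_of_notMem, Finset.card_image_of_injective _ (cvcTail_injective o),
        Finset.card_sigma]
      · simp
      · simp only [Finset.mem_image, not_exists, not_and]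
        rintro ⟨e, j⟩ - h
        unfold cvcTail at h
        split_ifs at h <;> simp at h
    have hle : T.card ≤ t v + 1 := by
      rw [← Set.ncard_coe_finset]
      refine le_trans (Set.ncard_le_ncard ?_ ((cvcEdges_finite A w).subset fun p hp => hp.1)) hc
      intro p hp
      rcases Finset.mem_insert.1 (Finset.mem_coe.1 hp) with rfl | hp
      · have hpe : ((Sum.inl (Sum.inl v), Sum.inl (Sum.inr v)) : CVCV V × CVCV V)
            ∈ cvcEdges A w := by simp [cvcEdges, cvcVset, cvcBase]
        exact ⟨hpe, Or.inl ⟨hg _ hpe hpend, rfl⟩⟩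
      · obtain ⟨⟨e, j⟩, hq, rfl⟩ := Finset.mem_image.1 hp
        rw [Finset.mem_sigma, hF, Finset.mem_filter, Finset.mem_range] at hq
        obtain ⟨⟨he, ho⟩, hj⟩ := hq
        refine ⟨hE e he j hj, Or.inl ⟨hg _ (hE e he j hj) (hforce e he j hj), ?_⟩⟩
        unfold cvcTail
        rcases ho with ⟨h1, h2⟩ | ⟨h1, h2⟩
        · rw [if_pos h2, ← h1]
        · rw [if_neg (by simp [h2]), ← h1]
    omega
  · refine le_trans (le_of_eq (Finset.sum_eq_zero fun e he => ?_)) (Nat.zero_le _)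
    rw [hF, Finset.mem_filter] at he
    obtain ⟨he, ho⟩ := he
    by_contra hne
    have hj : 0 < w e := Nat.pos_of_ne_zero hne
    have := (hor _ (hE e he 0 hj)).resolve_right (hforce e he 0 hj)
    apply hv
    unfold cvcTail at this
    rcases ho with ⟨h1, h2⟩ | ⟨h1, h2⟩
    · rw [if_pos h2] at this
      rw [← h1]; exact this
    · rw [if_neg (by simp [h2])] at this
      rw [← h1]; exact this

/-- The cover built from an orientation. -/
def cvcCover {V : Type*} (A : Finset (V × V)) (w : V × V → ℕ) (o : V × V → Bool) :
    Set (CVCV V) :=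
  {u | u ∈ cvcVset A w ∧
    match u with
    | Sum.inl (Sum.inl _) => True
    | Sum.inl (Sum.inr _) => False
    | Sum.inr (e, Sum.inl s) => s = o e
    | Sum.inr (e, Sum.inr (_, _, p)) => p = if o e = true then 1 else 0}

theorem cvc_ncard_le {α : Type*} (s : Set α) (T : Finset α) (n : ℕ)
    (h : ∀ x ∈ s, x ∈ T) (hT : T.card ≤ n) : s.ncard ≤ n := by
  refine le_trans (Set.ncard_le_ncard (t := (T : Set α)) h T.finite_toSet) ?_
  rwa [Set.ncard_coe_finset]

theorem cvc_backward {V : Type*} [Fintype V] [DecidableEq V]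
    (A : Finset (V × V)) (w : V × V → ℕ) (t : V → ℕ)
    (o : V × V → Bool)
    (ho : ∀ v : V,
      (∑ e ∈ A.filter (fun e => (e.1 = v ∧ o e = true) ∨ (e.2 = v ∧ o e = false)), w e)
        ≤ t v) :
    ∃ (S : Set (CVCV V)) (g : CVCV V × CVCV V → Bool),
      S ⊆ cvcVset A w ∧
      S.ncard ≤ Fintype.card V + ∑ e ∈ A, (2 * w e + 1) ∧
      (∀ p ∈ cvcEdges A w, if g p = true then p.1 ∈ S else p.2 ∈ S) ∧
      (∀ v ∈ S,
        ({p | p ∈ cvcEdges A w ∧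
          ((g p = true ∧ p.1 = v) ∨ (g p = false ∧ p.2 = v))}).ncard ≤ cvcCap w t v) := by
  classical
  refine ⟨cvcCover A w o, fun p => decide (p.2 ∉ cvcCover A w o), fun u hu => hu.1, ?_, ?_, ?_⟩
  · rw [← cvcIdx_card, ← Set.ncard_coe_finset]
    refine Set.ncard_le_ncard_of_injOn cvcPhi (fun u hu => cvcPhi_mem A w u hu.1) ?_
      (Finset.finite_toSet _)
    rintro ((x | x) | ⟨e, s | ⟨s, j, p⟩⟩) ⟨-, hu⟩ ((x' | x') | ⟨e', s' | ⟨s', j', p'⟩⟩) ⟨-, hu'⟩ h <;>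
      simp_all [cvcPhi]
  · rintro ⟨u, u'⟩ ⟨h1, h2, h3⟩
    by_cases h : u' ∈ cvcCover A w o
    · simp [h]
    · simp only [h, not_false_eq_true, decide_true, if_true]
      refine ⟨h1, ?_⟩
      have h' : ¬ _ := fun hh => h ⟨h2, hh⟩
      clear h
      rcases u with (x | x) | ⟨e, s | ⟨s, j, p⟩⟩ <;>
      rcases u' with (x' | x') | ⟨e', s' | ⟨s', j', p'⟩⟩ <;>
        simp only [cvcBase, cvcGadBase] at h3 h' ⊢
      · obtain ⟨rfl, rfl, rfl⟩ := h3
        cases hoe : o e <;> simp_all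
      · obtain ⟨rfl, rfl, h3⟩ := h3
        cases hoe : o e <;> cases s <;> fin_cases p' <;> simp_all
      · exact h3.2.elim
      · obtain ⟨rfl, rfl, rfl, h3, h4⟩ := h3
        cases hoe : o e <;> fin_cases p <;> fin_cases p' <;> simp_all
  · rintro ((x | x) | ⟨e, s | ⟨s, j, p⟩⟩) hv
    · refine cvc_ncard_le _ (insert (Sum.inl (Sum.inl x), Sum.inl (Sum.inr x))
        (((A.filter (fun e => (e.1 = x ∧ o e = true) ∨ (e.2 = x ∧ o e = false))).sigma
          fun e => Finset.range (w e)).image (cvcTail o))) _ ?_ ?_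
      · rintro ⟨u, u'⟩ ⟨⟨h1, h2, h3⟩, ⟨hg, hx⟩ | ⟨hg, hx⟩⟩
        · dsimp only at hx h1 h2 h3 hg
          subst hx
          have h' : u' ∉ cvcCover A w o := by simpa using hg
          have h' : ¬ _ := fun hh => h' ⟨h2, hh⟩
          rcases u' with (x' | x') | ⟨e', s' | ⟨s', j', p'⟩⟩
          · exact absurd h3 id
          · have h3 : x = x' := h3
            subst h3
            exact Finset.mem_insert_self _ _
          · exact absurd h3 id
          · refine Finset.mem_insert_of_mem (Finset.mem_image.2 ⟨⟨e', j'⟩, ?_, ?_⟩)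
            · have h2 : e' ∈ A ∧ j' < w e' := h2
              rw [Finset.mem_sigma, Finset.mem_filter, Finset.mem_range]
              refine ⟨⟨h2.1, ?_⟩, h2.2⟩
              cases hoe : o e' <;> cases s' <;> fin_cases p' <;> simp_all [cvcBase]
            · unfold cvcTail
              cases hoe : o e' <;> cases s' <;> fin_cases p' <;> simp_all [cvcBase]
        · dsimp only at hx h1 h2 h3 hg
          subst hx
          rcases u with (x' | x') | ⟨e', s' | ⟨s', j', p'⟩⟩ <;> exact absurd h3 id
      · refine (Finset.card_insert_le _ _).trans (Nat.add_le_add_right ?_ 1)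
        refine Finset.card_image_le.trans ?_
        rw [Finset.card_sigma]
        simpa using ho x
    · exact absurd hv.2 id
    · refine cvc_ncard_le _ (insert (Sum.inr (e, Sum.inl false), Sum.inr (e, Sum.inl true))
        ((Finset.range (w e)).image fun j => (Sum.inr (e, Sum.inl s),
          Sum.inr (e, Sum.inr (s, j, if s = true then 0 else 1))))) _ ?_ ?_
      · rintro ⟨u, u'⟩ ⟨⟨h1, h2, h3⟩, ⟨hg, hx⟩ | ⟨hg, hx⟩⟩
        · dsimp only at hx h1 h2 h3 hg
          clear hg hv
          subst hx
          rcases u' with (x' | x') | ⟨e', s' | ⟨s', j', p'⟩⟩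
          · exact absurd h3 id
          · exact absurd h3 id
          · obtain ⟨rfl, rfl, rfl⟩ := h3
            exact Finset.mem_insert_self _ _
          · obtain ⟨rfl, rfl, h3⟩ := h3
            have h2 : e ∈ A ∧ j' < w e := h2
            refine Finset.mem_insert_of_mem (Finset.mem_image.2 ⟨j', by simpa using h2.2, ?_⟩)
            cases s <;> fin_cases p' <;> simp_all
        · dsimp only at hx h1 h2 h3 hg
          clear hg hv
          subst hx
          rcases u with (x' | x') | ⟨e', s' | ⟨s', j', p'⟩⟩
          · exact absurd h3 id
          · exact absurd h3 id
          · obtain ⟨rfl, rfl, rfl⟩ := h3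
            exact Finset.mem_insert_self _ _
          · exact absurd h3.2 id
      · refine (Finset.card_insert_le _ _).trans (Nat.add_le_add_right ?_ 1)
        refine Finset.card_image_le.trans ?_
        simp
    · refine cvc_ncard_le _ {(Sum.inr (e, Sum.inr (s, j, 0)), Sum.inr (e, Sum.inr (s, j, 1))),
        (if s = false ∧ p = 0 then Sum.inl (Sum.inl e.1)
         else if s = true ∧ p = 1 then Sum.inl (Sum.inl e.2)
         else Sum.inr (e, Sum.inl s), Sum.inr (e, Sum.inr (s, j, p)))} _ ?_ Finset.card_le_two
      rintro ⟨u, u'⟩ ⟨⟨h1, h2, h3⟩, ⟨hg, hx⟩ | ⟨hg, hx⟩⟩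
      · dsimp only at hx h1 h2 h3 hg
        clear hg hv
        subst hx
        rcases u' with (x' | x') | ⟨e', s' | ⟨s', j', p'⟩⟩
        · exact absurd h3 id
        · exact absurd h3 id
        · exact absurd h3.2 id
        · obtain ⟨rfl, rfl, rfl, h3, h4⟩ := h3
          fin_cases p <;> fin_cases p' <;> simp_all
      · dsimp only at hx h1 h2 h3 hg
        clear hg hv
        subst hx
        rcases u with (x' | x') | ⟨e', s' | ⟨s', j', p'⟩⟩
        · cases s <;> fin_cases p <;> simp_all [cvcBase]
        · exact absurd h3 id
        · obtain ⟨rfl, rfl, h3⟩ := h3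
          cases s' <;> fin_cases p <;> simp_all
        · obtain ⟨rfl, rfl, rfl, h3, h4⟩ := h3
          fin_cases p <;> fin_cases p' <;> simp_all

theorem cvc_gadget_iff_max_outdegree_orientation
    {V : Type*} [Fintype V] [DecidableEq V]
    (A : Finset (V × V)) (w : V × V → ℕ) (t : V → ℕ)
    (hA : ∀ e ∈ A, e.1 ≠ e.2 ∧ (e.2, e.1) ∉ A)
    (hw : ∀ e ∈ A, 0 < w e) (ht : ∀ v, 0 < t v) :
    (∃ (S : Set (CVCV V)) (g : CVCV V × CVCV V → Bool),
      S ⊆ cvcVset A w ∧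
      S.ncard ≤ Fintype.card V + ∑ e ∈ A, (2 * w e + 1) ∧
      (∀ p ∈ cvcEdges A w, if g p = true then p.1 ∈ S else p.2 ∈ S) ∧
      (∀ v ∈ S,
        ({p | p ∈ cvcEdges A w ∧
          ((g p = true ∧ p.1 = v) ∨ (g p = false ∧ p.2 = v))}).ncard ≤ cvcCap w t v)) ↔
    (∃ o : V × V → Bool, ∀ v : V,
      (∑ e ∈ A.filter (fun e => (e.1 = v ∧ o e = true) ∨ (e.2 = v ∧ o e = false)), w e)
        ≤ t v) := by
  constructor
  · rintro ⟨S, g, h1, h2, h3, h4⟩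
    exact cvc_forward A w t S g h1 h2 h3 h4
  · rintro ⟨o, ho⟩
    exact cvc_backward A w t o ho
end

section
/- Let G=(V,E) be a graph, let f : V → ℕ with f(v) ≥ 1 for every vertex v, let k = max_{v∈V} f(v), assume k ≥ 2, and let ℓ ∈ ℕ. Let G' be the graph obtained from G by adding, for each vertex v ∈ V, exactly k − f(v) new pendant vertices adjacent only to v, and let ℓ' = ℓ + Σ_{v∈V}(k − f(v)). Then G has a set S ⊆ V with |S| ≤ ℓ such that every vertex v ∉ S has at least f(v) neighbours in S, if and only if G' has a set S' ⊆ V(G') with |S'| ≤ ℓ' such that every vertex of G' not in S' has at least k neighbours in S'. -/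
/-!
Reduction from `f`-Dominating Set to `k`-Dominating Set by adding pendants.

`G'` lives on the vertex type `V ⊕ (V × ℕ)`: `Sum.inl v` is the original vertex
`v` and `Sum.inr (v, j)` (for `j < k - f v`) is the `j`-th new pendant vertex
attached to `v`.  `pendVset` is the vertex set of `G'` and `pendAdj` its
adjacency relation.
-/

open Finset

/-- Adjacency of the graph `G'` obtained by attaching pendant vertices. -/
def pendAdj {V : Type*} (G : SimpleGraph V) : (V ⊕ V × ℕ) → (V ⊕ V × ℕ) → Prop
  | Sum.inl u, Sum.inl v => G.Adj u v
  | Sum.inl u, Sum.inr (v, _) => u = v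
  | Sum.inr (v, _), Sum.inl u => u = v
  | _, _ => False

/-- The vertex set of `G'`: all original vertices, and `k - f v` pendants at `v`. -/
def pendVset {V : Type*} (f : V → ℕ) (k : ℕ) : Set (V ⊕ V × ℕ) :=
  {u | match u with
       | Sum.inl _ => True
       | Sum.inr (v, j) => j < k - f v}

/-- The set of all pendant vertices, as a finset. -/
def pendFin {V : Type*} [Fintype V] (f : V → ℕ) (k : ℕ) : Finset (V ⊕ V × ℕ) :=
  (univ.sigma fun v => range (k - f v)).map
    ⟨fun x : (Σ _ : V, ℕ) => Sum.inr (x.1, x.2), by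
      rintro ⟨a, b⟩ ⟨c, d⟩ h
      simp only [Sum.inr.injEq, Prod.mk.injEq] at h
      obtain ⟨rfl, rfl⟩ := h
      rfl⟩

lemma mem_pendFin_inr {V : Type*} [Fintype V] (f : V → ℕ) (k : ℕ) (v : V) (j : ℕ) :
    (Sum.inr (v, j) : V ⊕ V × ℕ) ∈ pendFin f k ↔ j < k - f v := by
  simp only [pendFin, Finset.mem_map, Finset.mem_sigma, Finset.mem_univ, true_and,
    Finset.mem_range]
  constructor
  · rintro ⟨⟨a, b⟩, h, he⟩
    have he' : (Sum.inr (a, b) : V ⊕ V × ℕ) = Sum.inr (v, j) := he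
    simp only [Sum.inr.injEq, Prod.mk.injEq] at he'
    obtain ⟨rfl, rfl⟩ := he'
    exact h
  · intro h
    exact ⟨⟨v, j⟩, h, rfl⟩

lemma mem_pendFin_inl {V : Type*} [Fintype V] (f : V → ℕ) (k : ℕ) (v : V) :
    (Sum.inl v : V ⊕ V × ℕ) ∉ pendFin f k := by
  simp [pendFin]

lemma pend_ncard {V : Type*} [Fintype V] (f : V → ℕ) (k : ℕ) (S : Set V) :
    ((Sum.inl '' S : Set (V ⊕ V × ℕ)) ∪ ↑(pendFin f k)).ncard
      = S.ncard + ∑ v, (k - f v) := by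
  rw [Set.ncard_union_eq _ (Set.toFinite _) (Finset.finite_toSet _),
    Set.ncard_image_of_injective _ Sum.inl_injective, Set.ncard_coe_finset]
  · simp [pendFin]
  · rw [Set.disjoint_left]
    rintro _ ⟨v, -, rfl⟩ h
    exact mem_pendFin_inl f k v h

lemma pend_nbr_ncard {V : Type*} [Fintype V] (G : SimpleGraph V) (f : V → ℕ) (k : ℕ)
    (S : Set V) (v : V) :
    (((Sum.inl '' S : Set (V ⊕ V × ℕ)) ∪ ↑(pendFin f k)) ∩
      {x | pendAdj G (Sum.inl v) x}).ncard
      = (S ∩ {u | G.Adj v u}).ncard + (k - f v) := by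
  have h : (((Sum.inl '' S : Set (V ⊕ V × ℕ)) ∪ ↑(pendFin f k)) ∩
      {x | pendAdj G (Sum.inl v) x}) = Sum.inl '' (S ∩ {u | G.Adj v u}) ∪
        (fun j : ℕ => (Sum.inr (v, j) : V ⊕ V × ℕ)) '' ↑(range (k - f v)) := by
    ext x
    rcases x with u | ⟨u, j⟩
    · simp [mem_pendFin_inl, pendAdj]
    · simp only [Set.mem_inter_iff, Set.mem_union, Set.mem_image, reduceCtorEq, and_false,
        exists_false, false_or, Finset.mem_coe, mem_pendFin_inr, Set.mem_setOf_eq, pendAdj,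
        Finset.mem_range, Sum.inr.injEq, Prod.mk.injEq]
      constructor
      · rintro ⟨h, rfl⟩
        exact ⟨j, h, rfl, rfl⟩
      · rintro ⟨i, h, rfl, rfl⟩
        exact ⟨h, rfl⟩
  rw [h, Set.ncard_union_eq _ (Set.toFinite _) (Set.toFinite _),
    Set.ncard_image_of_injective _ Sum.inl_injective, Set.ncard_image_of_injective,
    Set.ncard_coe_finset, card_range]
  · intro a b hab
    simpa using hab
  · rw [Set.disjoint_left]
    rintro _ ⟨v, -, rfl⟩ h
    simp at h

theorem fdominating_iff_kdominating_with_pendants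
    {V : Type*} [Fintype V] [DecidableEq V]
    (G : SimpleGraph V) (f : V → ℕ) (hf : ∀ v, 1 ≤ f v)
    (k : ℕ) (hub : ∀ v, f v ≤ k) (hmax : ∃ v, f v = k) (hk : 2 ≤ k) (ℓ : ℕ) :
    (∃ S : Set V, S.ncard ≤ ℓ ∧
      ∀ v, v ∉ S → f v ≤ (S ∩ {u | G.Adj v u}).ncard) ↔
    (∃ S' : Set (V ⊕ V × ℕ), S' ⊆ pendVset f k ∧
      S'.ncard ≤ ℓ + ∑ v, (k - f v) ∧
      ∀ u ∈ pendVset f k, u ∉ S' → k ≤ (S' ∩ {x | pendAdj G u x}).ncard) := by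
  constructor
  · rintro ⟨S, hS, hd⟩
    refine ⟨(Sum.inl '' S) ∪ ↑(pendFin f k), ?_, ?_, ?_⟩
    · rintro (u | ⟨u, j⟩) hu
      · trivial
      · simpa [mem_pendFin_inr, pendVset] using hu
    · rw [pend_ncard]
      omega
    · rintro (u | ⟨u, j⟩) hu hn
      · rw [pend_nbr_ncard]
        have h1 : u ∉ S := fun h => hn (Or.inl ⟨u, h, rfl⟩)
        have := hd u h1
        have := hub u
        omega
      · exact absurd (Or.inr ((mem_pendFin_inr f k u j).2 hu)) hn
  · rintro ⟨S', hsub, hc, hd⟩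
    have hS' : S' = (Sum.inl '' (Sum.inl ⁻¹' S')) ∪ ↑(pendFin f k) := by
      ext x
      rcases x with u | ⟨u, j⟩
      · simp [mem_pendFin_inl]
      · simp only [Set.mem_union, Set.mem_image, reduceCtorEq, and_false,
          exists_false, false_or, Finset.mem_coe, mem_pendFin_inr]
        refine ⟨fun h => hsub h, fun h => ?_⟩
        by_contra hn
        have h1 := hd (Sum.inr (u, j)) h hn
        have h2 : (S' ∩ {x | pendAdj G (Sum.inr (u, j)) x}) ⊆ {Sum.inl u} := by
          rintro (w | ⟨w, i⟩) ⟨-, hw⟩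
          · have hw' : w = u := hw
            rw [hw']
            rfl
          · exact hw.elim
        have h3 := Set.ncard_le_ncard h2
        rw [Set.ncard_singleton] at h3
        omega
    refine ⟨Sum.inl ⁻¹' S', ?_, fun v hv => ?_⟩
    · rw [hS', pend_ncard] at hc
      omega
    · have h1 := hd (Sum.inl v) trivial hv
      rw [hS', pend_nbr_ncard] at h1
      have := hub v
      omega
end

section
/- Let I be a Binary CSP instance on a graph G containing two edges {a,b} and {c,d} with a, b, c, d four distinct vertices. Construct an instance I' as follows: delete the edges {a,b} and {c,d}; add three new vertices m, a', c' and the edges {a,m}, {c,m}, {m,a'}, {m,c'}, {a',b}, {c',d}; introduce fresh colours m_{ij} for i ∈ C(a) and j ∈ C(c); set C(a') = C(a), C(c') = C(c), and C(m) = {m_{ij} : i ∈ C(a), j ∈ C(c)}; set the constraints C(m,a) = C(m,a') = {(m_{ij}, i) : i ∈ C(a), j ∈ C(c)}, C(m,c) = C(m,c') = {(m_{ij}, j) : i ∈ C(a), j ∈ C(c)}, C(a',b) = C(a,b), and C(c',d) = C(c,d); all other domains and constraints are unchanged. Then I is satisfiable if and only if I' is satisfiable. -/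
/-!
The crossover gadget for Binary CSP.

A Binary CSP instance is given by a vertex type `V`, a colour type `C`, a
symmetric edge relation `Erel`, domains `dom : V → Set C` and constraints
`con : V → V → Set (C × C)` (with `con v u` the reversed pairs of `con u v`).

Given two edges `{a,b}` and `{c,d}` on four distinct vertices, the new instance
`I'` lives on the vertex type `V ⊕ Fin 3`, where `Sum.inr 0 = m`,
`Sum.inr 1 = a'` and `Sum.inr 2 = c'`, and on the colour type `C ⊕ (C × C)`,
where `Sum.inl` embeds the old colours and `Sum.inr (i, j)` is the fresh colour
`m_{ij}`.  `crossE` is the new edge relation (edges `{a,b}`, `{c,d}` deleted;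
edges `{a,m}, {c,m}, {m,a'}, {m,c'}, {a',b}, {c',d}` added), `crossDom` the new
domains and `crossCon` the new constraints.
-/

/-- Lift a constraint on old colours to the new colour type. -/
def liftCon {C : Type*} (S : Set (C × C)) : Set ((C ⊕ C × C) × (C ⊕ C × C)) :=
  {p | ∃ i j : C, (i, j) ∈ S ∧ p = (Sum.inl i, Sum.inl j)}

/-- The constraint `{(m_{ij}, i) : i ∈ dom a, j ∈ dom c}` between `m` and `a`
(or `a'`). -/
def mConFst {V C : Type*} (dom : V → Set C) (a c : V) :
    Set ((C ⊕ C × C) × (C ⊕ C × C)) :=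
  {p | ∃ i ∈ dom a, ∃ j ∈ dom c, p = (Sum.inr (i, j), Sum.inl i)}

/-- The constraint `{(m_{ij}, j) : i ∈ dom a, j ∈ dom c}` between `m` and `c`
(or `c'`). -/
def mConSnd {V C : Type*} (dom : V → Set C) (a c : V) :
    Set ((C ⊕ C × C) × (C ⊕ C × C)) :=
  {p | ∃ i ∈ dom a, ∃ j ∈ dom c, p = (Sum.inr (i, j), Sum.inl j)}

/-- The reversal of a constraint. -/
def revCon {D : Type*} (S : Set (D × D)) : Set (D × D) := {p | (p.2, p.1) ∈ S}

/-- The edge relation of the instance `I'`. -/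
def crossE {V : Type*} (Erel : V → V → Prop) (a b c d : V) :
    (V ⊕ Fin 3) → (V ⊕ Fin 3) → Prop := fun u v =>
  (∃ x y : V, u = Sum.inl x ∧ v = Sum.inl y ∧ Erel x y ∧
    ¬(x = a ∧ y = b) ∧ ¬(x = b ∧ y = a) ∧ ¬(x = c ∧ y = d) ∧ ¬(x = d ∧ y = c)) ∨
  (u = Sum.inl a ∧ v = Sum.inr 0) ∨ (u = Sum.inr 0 ∧ v = Sum.inl a) ∨
  (u = Sum.inl c ∧ v = Sum.inr 0) ∨ (u = Sum.inr 0 ∧ v = Sum.inl c) ∨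
  (u = Sum.inr 0 ∧ v = Sum.inr 1) ∨ (u = Sum.inr 1 ∧ v = Sum.inr 0) ∨
  (u = Sum.inr 0 ∧ v = Sum.inr 2) ∨ (u = Sum.inr 2 ∧ v = Sum.inr 0) ∨
  (u = Sum.inr 1 ∧ v = Sum.inl b) ∨ (u = Sum.inl b ∧ v = Sum.inr 1) ∨
  (u = Sum.inr 2 ∧ v = Sum.inl d) ∨ (u = Sum.inl d ∧ v = Sum.inr 2)

/-- The domains of the instance `I'`. -/
def crossDom {V C : Type*} (dom : V → Set C) (a c : V) :
    (V ⊕ Fin 3) → Set (C ⊕ C × C)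
  | Sum.inl v => Sum.inl '' dom v
  | Sum.inr g =>
      if g = 0 then {p | ∃ i ∈ dom a, ∃ j ∈ dom c, p = Sum.inr (i, j)}
      else if g = 1 then Sum.inl '' dom a
      else Sum.inl '' dom c

/-- The constraints of the instance `I'`. -/
def crossCon {V C : Type*} [DecidableEq V] (dom : V → Set C)
    (con : V → V → Set (C × C)) (a b c d : V) :
    (V ⊕ Fin 3) → (V ⊕ Fin 3) → Set ((C ⊕ C × C) × (C ⊕ C × C))
  | Sum.inl x, Sum.inl y => liftCon (con x y)
  | Sum.inr g, Sum.inl x =>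
      if g = 0 then
        (if x = a then mConFst dom a c else if x = c then mConSnd dom a c else ∅)
      else if g = 1 then (if x = b then liftCon (con a b) else ∅)
      else (if x = d then liftCon (con c d) else ∅)
  | Sum.inl x, Sum.inr g =>
      if g = 0 then
        (if x = a then revCon (mConFst dom a c)
         else if x = c then revCon (mConSnd dom a c) else ∅)
      else if g = 1 then (if x = b then revCon (liftCon (con a b)) else ∅)
      else (if x = d then revCon (liftCon (con c d)) else ∅)
  | Sum.inr g, Sum.inr g' =>
      if g = 0 ∧ g' = 1 then mConFst dom a c
      else if g = 0 ∧ g' = 2 then mConSnd dom a c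
      else if g = 1 ∧ g' = 0 then revCon (mConFst dom a c)
      else if g = 2 ∧ g' = 0 then revCon (mConSnd dom a c)
      else ∅

theorem crossover_gadget_satisfiable_iff
    {V C : Type*} [DecidableEq V]
    (Erel : V → V → Prop) (hEsym : ∀ u v, Erel u v → Erel v u)
    (dom : V → Set C) (con : V → V → Set (C × C))
    (hconsym : ∀ u v p q, (p, q) ∈ con u v ↔ (q, p) ∈ con v u)
    (a b c d : V)
    (hab : a ≠ b) (hac : a ≠ c) (had : a ≠ d)
    (hbc : b ≠ c) (hbd : b ≠ d) (hcd : c ≠ d)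
    (heab : Erel a b) (hecd : Erel c d) :
    (∃ g : V → C, (∀ v, g v ∈ dom v) ∧
      ∀ u v, Erel u v → (g u, g v) ∈ con u v) ↔
    (∃ g' : (V ⊕ Fin 3) → C ⊕ C × C,
      (∀ u, g' u ∈ crossDom dom a c u) ∧
      ∀ u v, crossE Erel a b c d u v →
        (g' u, g' v) ∈ crossCon dom con a b c d u v) := by
  constructor
  · rintro ⟨g, hd, hc⟩
    refine ⟨Sum.elim (fun v => Sum.inl (g v)) (fun k =>
      if k = 0 then Sum.inr (g a, g c)
      else if k = 1 then Sum.inl (g a) else Sum.inl (g c)), ?_, ?_⟩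
    · rintro (v | k)
      · exact ⟨g v, hd v, rfl⟩
      · fin_cases k
        · exact ⟨g a, hd a, g c, hd c, rfl⟩
        · exact ⟨g a, hd a, rfl⟩
        · exact ⟨g c, hd c, rfl⟩
    · have h1 := hc a b heab
      have h2 := hc c d hecd
      have h3 := hd a
      have h4 := hd c
      rintro u v (⟨x, y, rfl, rfl, he, -⟩ | h)
      · exact ⟨g x, g y, hc x y he, rfl⟩
      · rcases h with h | h | h | h | h | h | h | h | h | h | h | h <;>
          obtain ⟨rfl, rfl⟩ := h <;>
          simp [crossCon, liftCon, mConFst, mConSnd, revCon, hac.symm, h1, h2, h3, h4]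
  · rintro ⟨g', hd, hc⟩
    have hv : ∀ v, ∃ x, x ∈ dom v ∧ Sum.inl x = g' (Sum.inl v) := fun v => hd (Sum.inl v)
    choose g hg hgg using hv
    have ea := hc (Sum.inl a) (Sum.inr 0) (by simp [crossE])
    have ec := hc (Sum.inl c) (Sum.inr 0) (by simp [crossE])
    have ea' := hc (Sum.inr 0) (Sum.inr 1) (by simp [crossE])
    have ec' := hc (Sum.inr 0) (Sum.inr 2) (by simp [crossE])
    have eb := hc (Sum.inr 1) (Sum.inl b) (by simp [crossE])
    have ed := hc (Sum.inr 2) (Sum.inl d) (by simp [crossE])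
    simp only [← hgg] at ea ec eb ed
    simp [crossCon, liftCon, mConFst, mConSnd, revCon, hac.symm] at ea ec ea' ec' eb ed
    have kab : (g a, g b) ∈ con a b := by grind
    have kcd : (g c, g d) ∈ con c d := by grind
    refine ⟨g, hg, fun u v he => ?_⟩
    by_cases p1 : u = a ∧ v = b
    · obtain ⟨rfl, rfl⟩ := p1; exact kab
    by_cases p2 : u = b ∧ v = a
    · obtain ⟨rfl, rfl⟩ := p2; exact (hconsym _ _ _ _).1 kab
    by_cases p3 : u = c ∧ v = d
    · obtain ⟨rfl, rfl⟩ := p3; exact kcd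
    by_cases p4 : u = d ∧ v = c
    · obtain ⟨rfl, rfl⟩ := p4; exact (hconsym _ _ _ _).1 kcd
    have h := hc (Sum.inl u) (Sum.inl v) (Or.inl ⟨u, v, rfl, rfl, he, p1, p2, p3, p4⟩)
    simpa [← hgg, crossCon, liftCon] using h
end

section
/- Let I be a Binary CSP instance on a graph G and let v be a vertex of G with incident edges e_1 = {v,w_1}, …, e_d = {v,w_d}. Let T be any tree on new vertices v_1, …, v_p (disjoint from G) and let σ : {1,…,d} → {v_1,…,v_p} be any assignment of the incident edges of v to vertices of T. Construct I' from I as follows: delete v; add the tree T, where each vertex v_j has domain C(v_j) = C(v) and every tree edge {v_j, v_{j'}} carries the equality constraint {(c,c) : c ∈ C(v)}; and replace each edge e_i by the edge {σ(i), w_i} with constraint C(σ(i), w_i) = C(v, w_i); all other domains and constraints are unchanged. Then I is satisfiable if and only if I' is satisfiable. -/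
/-!
The vertex-splitting gadget for Binary CSP: a vertex `v` is replaced by a tree
`T` of copies of `v` (each with domain `dom v`, tree edges carrying the equality
constraint), and each edge `{v, w}` incident to `v` is replaced by the edge
`{σ w, w}` carrying the original constraint `con v w`, where `σ` assigns each
incident edge (equivalently, each neighbour `w` of `v`) to a tree vertex.

A Binary CSP instance is given by a vertex type `V`, a colour type `C`, a
symmetric irreflexive edge relation `Erel`, domains `dom : V → Set C` and
constraints `con : V → V → Set (C × C)` (with `con w u` the reversed pairs of
`con u w`).  The new instance lives on `V ⊕ Fin p` with `v` deleted; a solution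
of the new instance is a colouring `g'` respecting all (remaining and new)
domains and constraints.
-/

theorem vertex_splitting_satisfiable_iff
    {V C : Type*} [DecidableEq V]
    (Erel : V → V → Prop) (hEsym : ∀ u w, Erel u w → Erel w u)
    (hEirr : ∀ u, ¬ Erel u u)
    (dom : V → Set C) (con : V → V → Set (C × C))
    (hconsym : ∀ u w p q, (p, q) ∈ con u w ↔ (q, p) ∈ con w u)
    (v : V) (p : ℕ) (T : SimpleGraph (Fin p)) (hT : T.IsTree)
    (σ : V → Fin p) :
    (∃ g : V → C, (∀ u, g u ∈ dom u) ∧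
      ∀ u w, Erel u w → (g u, g w) ∈ con u w) ↔
    (∃ g' : (V ⊕ Fin p) → C,
      (∀ u : V, u ≠ v → g' (Sum.inl u) ∈ dom u) ∧
      (∀ i : Fin p, g' (Sum.inr i) ∈ dom v) ∧
      (∀ u w : V, u ≠ v → w ≠ v → Erel u w →
        (g' (Sum.inl u), g' (Sum.inl w)) ∈ con u w) ∧
      (∀ i i' : Fin p, T.Adj i i' →
        g' (Sum.inr i) = g' (Sum.inr i') ∧ g' (Sum.inr i) ∈ dom v) ∧
      (∀ w : V, Erel v w → (g' (Sum.inr (σ w)), g' (Sum.inl w)) ∈ con v w)) := by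
  constructor
  · rintro ⟨g, hd, hc⟩
    refine ⟨Sum.elim g (fun _ => g v), fun u _ => hd u, fun _ => hd v,
      fun u w _ _ h => hc u w h, fun _ _ _ => ⟨rfl, hd v⟩, fun w h => hc v w h⟩
  · rintro ⟨g', h1, h2, h3, h4, h5⟩
    have walk : ∀ i j : Fin p, T.Walk i j → g' (Sum.inr i) = g' (Sum.inr j) := by
      intro i j W
      induction W with
      | nil => rfl
      | cons h _ ih => exact (h4 _ _ h).1.trans ih
    have hconst : ∀ i j : Fin p, g' (Sum.inr i) = g' (Sum.inr j) := by
      intro i j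
      obtain ⟨W⟩ := hT.connected.preconnected i j
      exact walk i j W
    have hv : ∀ w, Erel v w → (g' (Sum.inr (σ v)), g' (Sum.inl w)) ∈ con v w := by
      intro w h
      rw [hconst (σ v) (σ w)]
      exact h5 w h
    refine ⟨fun u => if u = v then g' (Sum.inr (σ v)) else g' (Sum.inl u), ?_, ?_⟩
    · intro u
      by_cases hu : u = v
      · subst hu
        simpa using h2 _
      · simpa [hu] using h1 u hu
    · intro u w h
      by_cases hu : u = v
      · subst hu
        have hw : w ≠ u := fun e => hEirr u (e ▸ h)
        simpa [hw] using hv w h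
      · by_cases hw : w = v
        · subst hw
          have := (hconsym _ _ _ _).1 (hv u (hEsym _ _ h))
          simpa [hu] using this
        · simpa [hu, hw] using h3 u w hu hw h
end

section
/- Let I be a Binary CSP instance on a graph G = (V,E) with colour set 𝒞. Construct a List Colouring instance (H, L) as follows: the colours of H are the pairs (v,c) with v ∈ V and c ∈ C(v); each original vertex u ∈ V gets the list L(u) = {(u,c) : c ∈ C(u)}; every original edge of G is removed, and for each edge {u,v} ∈ E and each pair (a,b) ∈ (C(u) × C(v)) ∖ C(u,v), a new vertex z_{uv,a,b} is added, adjacent exactly to u and v, with list L(z_{uv,a,b}) = {(u,a),(v,b)}. Then I is satisfiable if and only if H has a proper list colouring, i.e., a function assigning to each vertex a colour from its list such that adjacent vertices receive different colours. -/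
/-!
Reduction from Binary CSP to List Colouring.

The input instance has vertex type `V`, colour type `C`, domains `dom`, an arc
set `A : Set (V × V)` listing each (undirected, loopless) edge exactly once as an
ordered pair, and constraints `con`.

The List Colouring instance `H` has vertex type `V ⊕ ((V × V) × C × C)`:
original vertices `Sum.inl u`, and, for each edge `e ∈ A` and each forbidden
pair `(a, b) ∈ (dom e.1 × dom e.2) ∖ con e.1 e.2`, the new vertex
`Sum.inr (e, a, b)`, adjacent exactly to `e.1` and `e.2` (original edges are
removed).  The colours of `H` are the pairs `(v, c)` with `c ∈ dom v`; the list
of `Sum.inl u` is `{(u, c) : c ∈ dom u}`, and the list of `Sum.inr (e, a, b)`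
is `{(e.1, a), (e.2, b)}`.
-/

/-- Vertices of the List Colouring instance. -/
abbrev LCV (V C : Type*) := V ⊕ ((V × V) × C × C)

/-- The vertex set of the List Colouring instance. -/
def lcVset {V C : Type*} (A : Set (V × V)) (dom : V → Set C)
    (con : V → V → Set (C × C)) : Set (LCV V C) :=
  {u | match u with
       | Sum.inl _ => True
       | Sum.inr (e, a, b) =>
          e ∈ A ∧ a ∈ dom e.1 ∧ b ∈ dom e.2 ∧ (a, b) ∉ con e.1 e.2}

/-- The adjacency relation of the List Colouring instance: each new vertex
`z_{uv,a,b}` is adjacent exactly to the two endpoints of its edge. -/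
def lcAdj {V C : Type*} : LCV V C → LCV V C → Prop := fun u u' =>
  match u, u' with
  | Sum.inl x, Sum.inr (e, _, _) => x = e.1 ∨ x = e.2
  | Sum.inr (e, _, _), Sum.inl x => x = e.1 ∨ x = e.2
  | _, _ => False

/-- The colour lists of the List Colouring instance. -/
def lcList {V C : Type*} [DecidableEq V] [DecidableEq C] (dom : V → Set C) :
    LCV V C → Set (V × C)
  | Sum.inl u => {q | q.1 = u ∧ q.2 ∈ dom u}
  | Sum.inr (e, a, b) => {(e.1, a), (e.2, b)}

theorem csp_satisfiable_iff_list_colourable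
    {V C : Type*} [DecidableEq V] [DecidableEq C]
    (A : Set (V × V)) (hA : ∀ e ∈ A, e.1 ≠ e.2 ∧ (e.2, e.1) ∉ A)
    (dom : V → Set C) (con : V → V → Set (C × C)) :
    (∃ g : V → C, (∀ v, g v ∈ dom v) ∧
      ∀ e ∈ A, (g e.1, g e.2) ∈ con e.1 e.2) ↔
    (∃ h : LCV V C → V × C,
      (∀ u ∈ lcVset A dom con, h u ∈ lcList dom u) ∧
      ∀ u ∈ lcVset A dom con, ∀ u' ∈ lcVset A dom con,
        lcAdj u u' → h u ≠ h u') := by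
  constructor
  · rintro ⟨g, hg, hc⟩
    have key : ∀ (x : V) (e : V × V) (a b : C), e ∈ A → (a, b) ∉ con e.1 e.2 →
        (x = e.1 ∨ x = e.2) → (x, g x) ≠ (if g e.1 = a then (e.2, b) else (e.1, a)) := by
      intro x e a b he hab hx heq
      have hne := (hA e he).1
      have hce := hc e he
      split_ifs at heq with h1
      · obtain ⟨h2, h3⟩ := Prod.mk.inj heq
        subst h2
        rw [h1, h3] at hce
        exact hab hce
      · obtain ⟨h2, h3⟩ := Prod.mk.inj heq
        rw [h2] at h3
        exact h1 h3
    refine ⟨fun u => match u with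
      | Sum.inl x => (x, g x)
      | Sum.inr (e, a, b) => if g e.1 = a then (e.2, b) else (e.1, a), ?_, ?_⟩
    · rintro (x | ⟨e, a, b⟩) hu
      · exact ⟨rfl, hg x⟩
      · show (if g e.1 = a then (e.2, b) else (e.1, a)) ∈ ({(e.1, a), (e.2, b)} : Set (V × C))
        split_ifs <;> simp
    · rintro (x | ⟨e, a, b⟩) hu (x' | ⟨e', a', b'⟩) hu' hadj
      · exact hadj.elim
      · exact key x e' a' b' hu'.1 hu'.2.2.2 hadj
      · exact (key x' e a b hu.1 hu.2.2.2 hadj).symm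
      · exact hadj.elim
  · rintro ⟨h, hl, hp⟩
    have hv : ∀ v, (h (Sum.inl v)).1 = v ∧ (h (Sum.inl v)).2 ∈ dom v :=
      fun v => hl (Sum.inl v) trivial
    have hpair : ∀ v, h (Sum.inl v) = (v, (h (Sum.inl v)).2) :=
      fun v => Prod.ext (hv v).1 rfl
    refine ⟨fun v => (h (Sum.inl v)).2, fun v => (hv v).2, fun e he => ?_⟩
    by_contra hcon
    have hz : (Sum.inr (e, (h (Sum.inl e.1)).2, (h (Sum.inl e.2)).2) : LCV V C) ∈
        lcVset A dom con := ⟨he, (hv e.1).2, (hv e.2).2, hcon⟩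
    rcases hl _ hz with h1 | h1
    · exact hp (Sum.inl e.1) trivial _ hz (Or.inl rfl) ((hpair e.1).trans h1.symm)
    · exact hp (Sum.inl e.2) trivial _ hz (Or.inr rfl) ((hpair e.2).trans h1.symm)
end
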